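/- arXiv:math/9902122 — 8 statements merged into one kernel-verified Lean document; each statement's English description precedes it below -/
import Mathlib

section
/- Let r ≥ 2 be an integer and let λ = exp(2πi/(2r)) ∈ ℂ. For every integer n with 1 ≤ n ≤ r − 1, the quantum integer [n] = (λ^n − λ^{−n})/(λ − λ^{−1}) lies in A_r and is a unit of A_r, i.e. both [n] and [n]⁻¹ belong to A_r. (Lemma 2 of the paper.) -/
open Complex Real

lemma aux_sum (z : ℂ) (m : ℕ) :
    (z - 1) * ∑ k ∈ Finset.range m, (k : ℂ) * z ^ k
      = m * z ^ m - z * ∑ k ∈ Finset.range m, z ^ k := by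
  induction m with
  | zero => simp
  | succ m ih =>
    rw [Finset.sum_range_succ, Finset.sum_range_succ, mul_add, ih]
    push_cast
    ring

lemma aux_inv (S : Subring ℂ) (z : ℂ) (hz : z ∈ S) (hz1 : z ≠ 1) (m : ℕ) (hm : m ≠ 0)
    (hzm : z ^ m = 1) (hS : (m : ℂ)⁻¹ ∈ S) : (z - 1)⁻¹ ∈ S := by
  have h0 : z - 1 ≠ 0 := sub_ne_zero.mpr hz1
  have hm' : (m : ℂ) ≠ 0 := by exact_mod_cast hm
  have hg : ∑ k ∈ Finset.range m, z ^ k = 0 := by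
    rw [geom_sum_eq hz1, hzm]; simp
  have h := aux_sum z m
  rw [hg, hzm] at h
  have e : (z - 1)⁻¹ = (m : ℂ)⁻¹ * ∑ k ∈ Finset.range m, (k : ℂ) * z ^ k := by
    apply inv_eq_of_mul_eq_one_right
    rw [mul_left_comm, h]
    simp [hm']
  rw [e]
  exact S.mul_mem hS (S.sum_mem fun k _ => S.mul_mem (natCast_mem S k) (S.pow_mem hz k))

/-- Lemma 2: for `λ = exp(2πi/(2r))` and `1 ≤ n ≤ r - 1`, the quantum integer
`[n] = (λ^n - λ^{-n})/(λ - λ^{-1})` lies in `A_r = ℤ[1/(2r)][λ]` and is a unit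
of that ring (its inverse also lies in `A_r`). -/
theorem stmt_1 (r : ℕ) (hr : 2 ≤ r)
    (lam : ℂ) (hlam : lam = Complex.exp (2 * Real.pi * Complex.I / (2 * r)))
    (n : ℕ) (hn1 : 1 ≤ n) (hn2 : n ≤ r - 1) :
    (lam ^ (n : ℤ) - lam ^ (-(n : ℤ))) / (lam - lam⁻¹)
      ∈ Subring.closure {lam, ((2 * (r : ℂ)))⁻¹} ∧
    ((lam ^ (n : ℤ) - lam ^ (-(n : ℤ))) / (lam - lam⁻¹))⁻¹
      ∈ Subring.closure {lam, ((2 * (r : ℂ)))⁻¹} := by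
  have hr0 : 2 * r ≠ 0 := by omega
  have hp : IsPrimitiveRoot lam (2 * r) := by
    have := Complex.isPrimitiveRoot_exp (2 * r) hr0
    rw [hlam]
    simpa using this
  have hl0 : lam ≠ 0 := hp.ne_zero hr0
  set S := Subring.closure {lam, ((2 * (r : ℂ)))⁻¹} with hSdef
  have hlS : lam ∈ S := Subring.subset_closure (by simp)
  have hrS : ((2 * r : ℕ) : ℂ)⁻¹ ∈ S := Subring.subset_closure (by simp)
  have hliS : lam⁻¹ ∈ S := by
    have : lam⁻¹ = lam ^ (2 * r - 1) := by
      apply inv_eq_of_mul_eq_one_right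
      rw [← pow_succ', Nat.sub_add_cancel (by omega), hp.pow_eq_one]
    rw [this]
    exact S.pow_mem hlS _
  have key : ∀ j : ℕ, 1 ≤ j → j ≤ r - 1 →
      (lam ^ (2 * j) ≠ 1 ∧ (lam ^ (2 * j) - 1)⁻¹ ∈ S) := by
    intro j h1 h2
    have hne : lam ^ (2 * j) ≠ 1 := hp.pow_ne_one_of_pos_of_lt (by omega) (by omega)
    refine ⟨hne, aux_inv S _ (S.pow_mem hlS _) hne (2 * r) hr0 ?_ hrS⟩
    rw [← pow_mul, mul_comm, pow_mul, hp.pow_eq_one, one_pow]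
  obtain ⟨hn, hnS⟩ := key n hn1 hn2
  obtain ⟨h1, h1S⟩ := key 1 le_rfl (by omega)
  have e : (lam ^ (n : ℤ) - lam ^ (-(n : ℤ))) / (lam - lam⁻¹)
      = lam⁻¹ ^ n * (lam ^ (2 * n) - 1) * (lam * (lam ^ (2 * 1) - 1)⁻¹) := by
    have a : lam ^ (n : ℤ) - lam ^ (-(n : ℤ)) = lam⁻¹ ^ n * (lam ^ (2 * n) - 1) := by
      rw [zpow_neg, zpow_natCast, inv_pow, two_mul, pow_add]
      field_simp
    have b : lam - lam⁻¹ = lam⁻¹ * (lam ^ (2 * 1) - 1) := by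
      field_simp
    rw [a, b, div_eq_mul_inv, mul_inv, inv_inv]
  rw [e]
  constructor
  · exact S.mul_mem (S.mul_mem (S.pow_mem hliS _) (S.sub_mem (S.pow_mem hlS _) S.one_mem))
      (S.mul_mem hlS h1S)
  · rw [mul_inv, mul_inv, mul_inv, inv_inv, inv_pow, inv_inv]
    exact S.mul_mem (S.mul_mem (S.pow_mem hlS _) hnS)
      (S.mul_mem hliS (S.sub_mem (S.pow_mem hlS _) S.one_mem))
end

section
/- Let p be an odd prime, s ≥ 1 an integer, and r ≥ 2 an integer such that 2r divides p^s + 1 or 2r divides p^s − 1 (equivalently, r divides (p^s ± 1)/2). Then for every i ≥ 0 one has Δ_i^{p^s} ≡ Δ_i (mod p) in the subring ℤ[λ] of ℂ generated by λ, i.e. Δ_i^{p^s} − Δ_i ∈ p·ℤ[λ]. (First part of Lemma 3 of the paper.) -/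
open Complex Real

theorem aux_add {R : Type*} [CommRing R] (p : ℕ) (hp : p.Prime) (s : ℕ) (a b : R) :
    (p : R) ∣ (a + b) ^ (p ^ s) - (a ^ (p ^ s) + b ^ (p ^ s)) := by
  obtain ⟨c, hc⟩ := exists_add_pow_prime_pow_eq hp a b s
  rw [hc]
  exact ⟨a * b * c, by ring⟩

theorem aux_neg {R : Type*} [CommRing R] (p q : ℕ) (hq : Odd q) (a : R)
    (ha : (p : R) ∣ a ^ q - a) : (p : R) ∣ (-a) ^ q - (-a) := by
  rw [hq.neg_pow]
  obtain ⟨c, hc⟩ := ha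
  exact ⟨-c, by linear_combination -hc⟩

theorem aux_mul {R : Type*} [CommRing R] (p q : ℕ) (a b : R)
    (ha : (p : R) ∣ a ^ q - a) (hb : (p : R) ∣ b ^ q - b) :
    (p : R) ∣ (a * b) ^ q - a * b := by
  rw [mul_pow]
  obtain ⟨c, hc⟩ := ha
  obtain ⟨d, hd⟩ := hb
  exact ⟨a ^ q * d + c * b, by linear_combination a ^ q * hd + b * hc⟩

theorem aux_add' {R : Type*} [CommRing R] (p : ℕ) (hp : p.Prime) (s : ℕ) (a b : R)
    (ha : (p : R) ∣ a ^ (p ^ s) - a) (hb : (p : R) ∣ b ^ (p ^ s) - b) :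
    (p : R) ∣ (a + b) ^ (p ^ s) - (a + b) := by
  obtain ⟨c, hc⟩ := ha
  obtain ⟨d, hd⟩ := hb
  obtain ⟨e, he⟩ := aux_add p hp s a b
  exact ⟨c + d + e, by linear_combination he + hc + hd⟩

theorem aux_main {R : Type*} [CommRing R] (p : ℕ) (hp : p.Prime) (s : ℕ) (hq : Odd (p ^ s))
    (x y : R) (hxy : x * y = 1) (r : ℕ) (hx : x ^ (2 * r) = 1)
    (hdiv : (2 * r) ∣ (p ^ s + 1) ∨ (2 * r) ∣ (p ^ s - 1)) :
    (p : R) ∣ (-(x + y)) ^ (p ^ s) - (-(x + y)) := by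
  apply aux_neg p _ hq
  have hyx : ∀ n : ℕ, x ^ n * y ^ n = 1 := fun n => by rw [← mul_pow, hxy, one_pow]
  have key : x ^ (p ^ s) + y ^ (p ^ s) = x + y := by
    rcases hdiv with ⟨k, hk⟩ | ⟨k, hk⟩
    · have e : x ^ (p ^ s) * x = 1 := by rw [← pow_succ, hk, pow_mul, hx, one_pow]
      have e1 : x ^ (p ^ s) = y := by linear_combination y * e - x ^ (p ^ s) * hxy
      have e2 := hyx (p ^ s)
      rw [e1] at e2 ⊢
      linear_combination x * e2 - y ^ (p ^ s) * hxy
    · have hk' : p ^ s = 2 * r * k + 1 := by have := hq.pos; omega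
      have e1 : x ^ (p ^ s) = x := by rw [hk', pow_succ, pow_mul, hx, one_pow, one_mul]
      have e2 := hyx (p ^ s)
      rw [e1] at e2 ⊢
      linear_combination y * e2 - y ^ (p ^ s) * hxy
  rw [← key]
  have := aux_add p hp s x y
  rwa [key] at this ⊢

/-- First part of Lemma 3: if `2r` divides `p^s + 1` or `p^s - 1` (`p` an odd
prime, `s ≥ 1`, `r ≥ 2`), then for every `i`, `Δ_i^{p^s} ≡ Δ_i (mod p)` in the
subring `ℤ[λ]` of `ℂ`, where `Δ_0 = 1`, `Δ_1 = -λ - λ⁻¹` and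
`Δ_{i+1} = Δ_1 Δ_i - Δ_{i-1}`. -/
theorem stmt_2 (p : ℕ) (hp : p.Prime) (hodd : Odd p) (s : ℕ) (hs : 1 ≤ s)
    (r : ℕ) (hr : 2 ≤ r)
    (lam : ℂ) (hlam : lam = Complex.exp (2 * Real.pi * Complex.I / (2 * r)))
    (hdiv : (2 * r) ∣ (p ^ s + 1) ∨ (2 * r) ∣ (p ^ s - 1))
    (Δ : ℕ → ℂ) (h0 : Δ 0 = 1) (h1 : Δ 1 = -lam - lam⁻¹)
    (hrec : ∀ i, 1 ≤ i → Δ (i + 1) = Δ 1 * Δ i - Δ (i - 1))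
    (i : ℕ) :
    ∃ z ∈ Subring.closure {lam}, Δ i ^ (p ^ s) - Δ i = (p : ℂ) * z := by
  have hq : Odd (p ^ s) := hodd.pow
  have hpow : lam ^ (2 * r) = 1 := by
    have := (Complex.isPrimitiveRoot_exp (2 * r) (by omega)).pow_eq_one
    rw [hlam]
    push_cast at this
    exact this
  have hne : lam ≠ 0 := by rw [hlam]; exact Complex.exp_ne_zero _
  have hmem : lam ∈ Subring.closure {lam} := Subring.subset_closure rfl
  have hinv : lam⁻¹ = lam ^ (2 * r - 1) := by
    apply inv_eq_of_mul_eq_one_right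
    rw [← pow_succ', Nat.sub_add_cancel (by omega), hpow]
  let x : Subring.closure {lam} := ⟨lam, hmem⟩
  let y : Subring.closure {lam} := ⟨lam⁻¹, by rw [hinv]; exact pow_mem hmem _⟩
  have hxy : x * y = 1 := Subtype.ext (mul_inv_cancel₀ hne)
  have hx : x ^ (2 * r) = 1 := Subtype.ext (by simpa [x] using hpow)
  have hm := aux_main p hp s hq x y hxy r hx hdiv
  have h1' : ((-(x + y) : Subring.closure {lam}) : ℂ) = Δ 1 := by
    rw [h1]; simp [x, y]; ring
  have main : ∀ n : ℕ, (∃ d : Subring.closure {lam}, (d : ℂ) = Δ n ∧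
        (p : Subring.closure {lam}) ∣ d ^ (p ^ s) - d) ∧
      (∃ d : Subring.closure {lam}, (d : ℂ) = Δ (n + 1) ∧
        (p : Subring.closure {lam}) ∣ d ^ (p ^ s) - d) := by
    intro n
    induction n with
    | zero => exact ⟨⟨1, by simp [h0], by simp⟩, ⟨-(x + y), h1', hm⟩⟩
    | succ n ih =>
      obtain ⟨⟨a, ha, ha'⟩, ⟨b, hb, hb'⟩⟩ := ih
      refine ⟨⟨b, hb, hb'⟩, ⟨-(x + y) * b + -a, ?_, ?_⟩⟩
      · rw [hrec (n + 1) (by omega), Nat.add_sub_cancel, ← h1', ← ha, ← hb]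
        push_cast
        ring
      · exact aux_add' p hp s _ _ (aux_mul p _ _ _ hm hb') (aux_neg p _ hq _ ha')
  obtain ⟨⟨d, hd, c, hc⟩, -⟩ := main i
  refine ⟨c, c.2, ?_⟩
  rw [← hd]
  have := congrArg (Subtype.val) hc
  simpa using this
end

section
/- Let p be an odd prime, s ≥ 1 an integer, and r ≥ 2 an integer such that 2r divides p^s + 1 or 2r divides p^s − 1. Set η² = −(λ − λ^{−1})²/(2r) ∈ ℂ. Then (η²)^{p^s} ≡ η² (mod p) in A_r, i.e. (η²)^{p^s} − η² ∈ p·A_r. (Second part of Lemma 3 of the paper.) -/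
theorem aux_ring {R : Type*} [CommRing R] (p s r : ℕ) (hp : p.Prime) (hodd : Odd p)
    (l m u : R) (hu : (2 * (r : R)) * u = 1)
    (h : (l ^ (p ^ s) = l ∧ m ^ (p ^ s) = m) ∨ (l ^ (p ^ s) = m ∧ m ^ (p ^ s) = l)) :
    (p : R) ∣ (-(l - m) ^ 2 * u) ^ (p ^ s) - (-(l - m) ^ 2 * u) := by
  have hq : Odd (p ^ s) := hodd.pow
  obtain ⟨z, hz⟩ := exists_add_pow_prime_pow_eq hp l (-m) s
  rw [hq.neg_pow m, ← sub_eq_add_neg, ← sub_eq_add_neg] at hz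
  have h1 : (p : R) ∣ ((l - m) ^ (p ^ s)) ^ 2 - (l - m) ^ 2 := by
    rw [hz]
    rcases h with ⟨a, b⟩ | ⟨a, b⟩
    · rw [a, b]
      exact ⟨2 * (l - m) * (l * -m * z) + p * (l * -m * z) ^ 2, by ring⟩
    · rw [a, b]
      exact ⟨2 * (m - l) * (l * -m * z) + p * (l * -m * z) ^ 2, by ring⟩
  have h2 : (p : R) ∣ (2 * (r : R)) ^ (p ^ s) - 2 * (r : R) := by
    have : (p : ℤ) ∣ (2 * (r : ℤ)) ^ (p ^ s) - 2 * (r : ℤ) := by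
      have := Fact.mk hp
      rw [← ZMod.intCast_zmod_eq_zero_iff_dvd]
      push_cast
      rw [ZMod.pow_card_pow, sub_self]
    obtain ⟨c, hc⟩ := this
    exact ⟨(c : R), by exact_mod_cast congrArg (Int.cast : ℤ → R) hc⟩
  have hu2 : (2 * (r : R)) ^ (p ^ s) * u ^ (p ^ s) = 1 := by rw [← mul_pow, hu, one_pow]
  obtain ⟨a, ha⟩ := h1
  obtain ⟨b, hb⟩ := h2
  have h3 : u ^ (p ^ s) - u = p * (-(b * u * u ^ (p ^ s))) := by
    linear_combination (-(u * u ^ (p ^ s))) * hb + u * hu2 - u ^ (p ^ s) * hu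
  rw [mul_pow, hq.neg_pow, ← pow_mul, mul_comm 2, pow_mul]
  refine ⟨-(a * u ^ (p ^ s)) + (l - m) ^ 2 * (b * u * u ^ (p ^ s)), ?_⟩
  linear_combination (-(u ^ (p ^ s))) * ha - (l - m) ^ 2 * h3

/-- Second part of Lemma 3: if `2r` divides `p^s + 1` or `p^s - 1` (`p` an odd
prime, `s ≥ 1`, `r ≥ 2`) and `η² = -(λ - λ⁻¹)²/(2r)`, then
`(η²)^{p^s} ≡ η² (mod p)` in `A_r = ℤ[1/(2r)][λ]`. -/
theorem stmt_3 (p s r : ℕ) (hp : p.Prime) (hodd : Odd p) (hs : 1 ≤ s) (hr : 2 ≤ r)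
    (lam : ℂ) (hlam : lam = Complex.exp (2 * Real.pi * Complex.I / (2 * r)))
    (hdiv : (2 * r) ∣ (p ^ s + 1) ∨ (2 * r) ∣ (p ^ s - 1))
    (η2 : ℂ) (hη2 : η2 = -(lam - lam⁻¹) ^ 2 / (2 * r)) :
    ∃ z ∈ Subring.closure {lam, ((2 * (r : ℂ)))⁻¹},
      η2 ^ (p ^ s) - η2 = (p : ℂ) * z := by
  have hr0 : (2 * (r : ℂ)) ≠ 0 := by
    have : (r : ℂ) ≠ 0 := by exact_mod_cast (by omega : r ≠ 0)
    simpa using this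
  have hl0 : lam ≠ 0 := by rw [hlam]; exact Complex.exp_ne_zero _
  have hroot : lam ^ (2 * r) = 1 := by
    rw [hlam, ← Complex.exp_nat_mul, Complex.exp_eq_one_iff]
    refine ⟨1, ?_⟩
    push_cast
    rw [mul_div_cancel₀ _ hr0, one_mul]
  have hl : lam ∈ Subring.closure {lam, ((2 * (r : ℂ)))⁻¹} :=
    Subring.subset_closure (by simp)
  have hu : ((2 * (r : ℂ)))⁻¹ ∈ Subring.closure {lam, ((2 * (r : ℂ)))⁻¹} :=
    Subring.subset_closure (by simp)
  have hm : lam⁻¹ ∈ Subring.closure {lam, ((2 * (r : ℂ)))⁻¹} := by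
    have : lam⁻¹ = lam ^ (2 * r - 1) := by
      rw [inv_eq_iff_eq_inv, ← mul_eq_one_iff_eq_inv₀ (pow_ne_zero _ hl0), ← pow_succ',
        Nat.sub_add_cancel (by omega), hroot]
    rw [this]
    exact Subring.pow_mem _ hl _
  have hpos : 1 ≤ p ^ s := Nat.one_le_pow _ _ hp.pos
  have key : (lam ^ (p ^ s) = lam ∧ lam⁻¹ ^ (p ^ s) = lam⁻¹) ∨
      (lam ^ (p ^ s) = lam⁻¹ ∧ lam⁻¹ ^ (p ^ s) = lam) := by
    rcases hdiv with ⟨k, hk⟩ | ⟨k, hk⟩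
    · right
      have : lam ^ (p ^ s) = lam⁻¹ := by
        rw [← mul_eq_one_iff_eq_inv₀ hl0, ← pow_succ, hk, pow_mul, hroot, one_pow]
      exact ⟨this, by rw [inv_pow, this, inv_inv]⟩
    · left
      have : lam ^ (p ^ s) = lam := by
        rw [← Nat.sub_add_cancel hpos, pow_succ, hk, pow_mul, hroot, one_pow, one_mul]
      exact ⟨this, by rw [inv_pow, this]⟩
  obtain ⟨z, hz⟩ := aux_ring (R := Subring.closure {lam, ((2 * (r : ℂ)))⁻¹}) p s r hp hodd
    ⟨lam, hl⟩ ⟨lam⁻¹, hm⟩ ⟨_, hu⟩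
    (by apply Subtype.ext; push_cast; exact mul_inv_cancel₀ hr0)
    (by simpa only [Subtype.ext_iff, SubmonoidClass.coe_pow] using key)
  refine ⟨z, z.2, ?_⟩
  have := congrArg Subtype.val hz
  push_cast at this
  rw [hη2, div_eq_mul_inv]
  exact this
end

section
/- Let r ≥ 1 be an integer, p a prime not dividing 2r, and s ≥ 1. Let ζ = exp(2πi/(8r)) and let A denote the smallest subring of ℂ containing ζ and 1/(2r). Then for every n ≥ 1 and every n × n matrix E with entries in A, Trace(E^{p^s}) ≡ (Trace E)^{p^s} (mod p) in A, i.e. Trace(E^{p^s}) − (Trace E)^{p^s} ∈ p·A. (The key trace congruence proved in Section 4 of the paper.) -/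
open Complex Real

open Polynomial in
/-- In characteristic `p`, the charpoly of `M ^ p ^ s` is the Frobenius twist of that of `M`. -/
theorem charpoly_pow_char_pow {R : Type*} [CommRing R] [Nontrivial R] {p : ℕ} [Fact p.Prime] [CharP R p]
    {n : Type*} [DecidableEq n] [Fintype n] [Nonempty n] (M : Matrix n n R) (s : ℕ) :
    (M ^ p ^ s).charpoly = M.charpoly.map (iterateFrobenius R p s) := by
  have hp : 0 < p ^ s := pow_pos (Fact.out : p.Prime).pos s
  apply expand_injective hp
  rw [← map_expand, map_iterateFrobenius_expand]
  unfold Matrix.charpoly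
  rw [AlgHom.map_det, ← Matrix.coe_detMonoidHom,
    ← (Matrix.detMonoidHom : Matrix n n R[X] →* R[X]).map_pow]
  apply congr_arg Matrix.det
  refine matPolyEquiv.injective ?_
  rw [map_pow, Matrix.matPolyEquiv_charmatrix, sub_pow_char_pow_of_commute, ← C_pow]
  · exact (id (matPolyEquiv_eq_X_pow_sub_C (p ^ s) M) :)
  · exact (C M).commute_X

theorem trace_pow_char_pow {R : Type*} [CommRing R] [Nontrivial R] {p : ℕ} [Fact p.Prime] [CharP R p]
    {n : Type*} [DecidableEq n] [Fintype n] [Nonempty n] (M : Matrix n n R) (s : ℕ) :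
    (M ^ p ^ s).trace = M.trace ^ p ^ s := by
  rw [Matrix.trace_eq_neg_charpoly_coeff, Matrix.trace_eq_neg_charpoly_coeff,
    charpoly_pow_char_pow, Polynomial.coeff_map, ← iterateFrobenius_def, map_neg]

theorem trace_pow_dvd {R : Type*} [CommRing R] {p : ℕ} (hp : p.Prime)
    {n : Type*} [DecidableEq n] [Fintype n] [Nonempty n] (M : Matrix n n R) (s : ℕ) :
    (p : R) ∣ (M ^ p ^ s).trace - M.trace ^ p ^ s := by
  by_cases hu : IsUnit (p : R)
  · exact hu.dvd
  have : Fact p.Prime := ⟨hp⟩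
  have : CharP (R ⧸ (Ideal.span {(p : R)} : Ideal R)) p := CharP.quotient R p hu
  have : Nontrivial (R ⧸ (Ideal.span {(p : R)} : Ideal R)) :=
    CharP.nontrivial_of_char_ne_one hp.ne_one
  rw [← Ideal.mem_span_singleton, ← Ideal.Quotient.eq_zero_iff_mem, map_sub, map_pow, sub_eq_zero,
    AddMonoidHom.map_trace, AddMonoidHom.map_trace, ← trace_pow_char_pow]
  congr 1
  exact map_pow (Ideal.Quotient.mk (Ideal.span {(p : R)})).mapMatrix M (p ^ s)

/-- The trace congruence of Section 4: if `p` is a prime not dividing `2r`,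
`s ≥ 1`, `ζ = exp(2πi/(8r))`, `A = ℤ[1/(2r)][ζ]` and `E` is a square matrix
with entries in `A`, then `Trace(E^{p^s}) ≡ (Trace E)^{p^s} (mod p)` in `A`. -/
theorem stmt_7 (r : ℕ) (hr : 1 ≤ r) (p : ℕ) (hp : p.Prime) (hpr : ¬ p ∣ 2 * r)
    (s : ℕ) (hs : 1 ≤ s)
    (ζ : ℂ) (hζ : ζ = Complex.exp (2 * Real.pi * Complex.I / (8 * r)))
    (n : ℕ) (hn : 1 ≤ n) (E : Matrix (Fin n) (Fin n) ℂ)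
    (hE : ∀ i j, E i j ∈ Subring.closure {ζ, ((2 * (r : ℂ)))⁻¹}) :
    ∃ z ∈ Subring.closure {ζ, ((2 * (r : ℂ)))⁻¹},
      (E ^ (p ^ s)).trace - E.trace ^ (p ^ s) = (p : ℂ) * z := by
  have : Nonempty (Fin n) := ⟨⟨0, hn⟩⟩
  set A := Subring.closure {ζ, ((2 * (r : ℂ)))⁻¹} with hA
  let F : Matrix (Fin n) (Fin n) A := fun i j => ⟨E i j, hE i j⟩
  have hF : A.subtype.mapMatrix F = E := rfl
  obtain ⟨z, hz⟩ := trace_pow_dvd hp F s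
  refine ⟨z, z.2, ?_⟩
  have h := congr_arg A.subtype hz
  rw [map_sub, map_pow, map_mul, map_natCast, AddMonoidHom.map_trace, AddMonoidHom.map_trace] at h
  have h2 : (F ^ p ^ s).map A.subtype = E ^ p ^ s := by
    rw [← hF]
    exact map_pow A.subtype.mapMatrix F (p ^ s)
  have h3 : F.map A.subtype = E := rfl
  rw [h2, h3] at h
  exact h
end

section
/- Let p be an odd prime and q, r positive integers with p not dividing 2qr. Let ζ = exp(2πi/(4qr)), and let m, l be integers and ε ∈ {+1, −1}. Then (Σ_{n=1}^{2qr} ζ^{−mpn² − 2(ql+ε)n})^p ≡ Σ_{n=1}^{2qr} ζ^{−mn² − 2(ql+ε)n} (mod p) in ℤ[ζ], i.e. the difference lies in p·ℤ[ζ]. (Congruence for Gauss-type sums proved in Section 5 of the paper.) -/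
open Complex Real

theorem aux_sum_pow (S : Subring ℂ) (p : ℕ) (hp : p.Prime) (s : Finset ℕ) (f : ℕ → ℂ)
    (hf : ∀ n, f n ∈ S) :
    ∃ z ∈ S, (∑ n ∈ s, f n) ^ p - ∑ n ∈ s, f n ^ p = (p : ℂ) * z := by
  induction s using Finset.induction_on with
  | empty => exact ⟨0, S.zero_mem, by simp [hp.ne_zero]⟩
  | insert a s ha ih =>
    obtain ⟨z, hz, h⟩ := ih
    have hs : ∑ n ∈ s, f n ∈ S := S.sum_mem fun n _ => hf n
    obtain ⟨t, ht⟩ := exists_add_pow_prime_eq hp (⟨f a, hf a⟩ : S) ⟨_, hs⟩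
    have ht' := congrArg (Subtype.val) ht
    push_cast at ht'
    refine ⟨z + f a * (∑ n ∈ s, f n) * t, S.add_mem hz (S.mul_mem (S.mul_mem (hf a) hs) t.2), ?_⟩
    rw [Finset.sum_insert ha, Finset.sum_insert ha, ht']
    linear_combination h

theorem aux_reindex (N p : ℕ) [NeZero N] (hc : Nat.Coprime N p) (F : ℤ → ℂ)
    (hF : ∀ a b : ℤ, (N : ℤ) ∣ a - b → F a = F b) :
    ∑ n ∈ Finset.Icc 1 N, F (p * n) = ∑ x : ZMod N, F (x.val : ℤ) := by
  have hinj : Set.InjOn (fun n : ℕ => ((p * n : ℕ) : ZMod N)) (Finset.Icc 1 N : Finset ℕ) := by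
    intro a ha b hb hab
    simp only [Finset.coe_Icc, Set.mem_Icc] at ha hb
    have h1 : p * a ≡ p * b [MOD N] := (ZMod.natCast_eq_natCast_iff _ _ _).1 hab
    have h2 : a ≡ b [MOD N] := Nat.ModEq.cancel_left_of_coprime hc h1
    have h3 := (Nat.modEq_iff_dvd.1 h2)
    have h4 : (b : ℤ) - a = 0 := by
      apply Int.eq_zero_of_abs_lt_dvd h3
      rw [abs_lt]; omega
    omega
  refine Finset.sum_nbij (fun n : ℕ => ((p * n : ℕ) : ZMod N)) (fun _ _ => Finset.mem_univ _)
    hinj ?_ ?_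
  · apply Finset.surjOn_of_injOn_of_card_le _ (fun _ _ => Finset.mem_coe.2 (Finset.mem_univ _)) hinj
    simp [ZMod.card]
  · intro n _
    apply hF
    rw [← ZMod.intCast_eq_intCast_iff_dvd_sub]
    simp

/-- The Gauss-sum congruence of Section 5: for an odd prime `p` not dividing
`2qr`, `ζ = exp(2πi/(4qr))`, integers `m, l` and `ε = ±1`,
`(Σ_{n=1}^{2qr} ζ^{-mpn² - 2(ql+ε)n})^p ≡ Σ_{n=1}^{2qr} ζ^{-mn² - 2(ql+ε)n}
(mod p)` in `ℤ[ζ]`. -/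
theorem stmt_9 (p q r : ℕ) (hp : p.Prime) (hodd : Odd p)
    (hq : 0 < q) (hr : 0 < r) (hpqr : ¬ p ∣ 2 * q * r)
    (ζ : ℂ) (hζ : ζ = Complex.exp (2 * Real.pi * Complex.I / (4 * q * r)))
    (m l ε : ℤ) (hε : ε = 1 ∨ ε = -1) :
    ∃ z ∈ Subring.closure {ζ},
      (∑ n ∈ Finset.Icc 1 (2 * q * r),
          ζ ^ (-(m * p * (n : ℤ) ^ 2) - 2 * ((q : ℤ) * l + ε) * (n : ℤ))) ^ p
        - ∑ n ∈ Finset.Icc 1 (2 * q * r),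
            ζ ^ (-(m * (n : ℤ) ^ 2) - 2 * ((q : ℤ) * l + ε) * (n : ℤ))
        = (p : ℂ) * z := by
  have hN : 0 < 2 * q * r := by positivity
  have hcop : Nat.Coprime (2 * q * r) p := ((Nat.Prime.coprime_iff_not_dvd hp).2 hpqr).symm
  have hz0 : ζ ≠ 0 := by rw [hζ]; exact Complex.exp_ne_zero _
  have hroot : ζ ^ (4 * q * r) = 1 := by
    rw [hζ, ← Complex.exp_nat_mul, ← Complex.exp_two_pi_mul_I]
    congr 1
    have : (q : ℂ) ≠ 0 := by exact_mod_cast hq.ne'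
    have : (r : ℂ) ≠ 0 := by exact_mod_cast hr.ne'
    push_cast
    field_simp
  have hrootz : ζ ^ (4 * q * r : ℤ) = 1 := by exact_mod_cast hroot
  have hmod : ∀ a b : ℤ, (4 * q * r : ℤ) ∣ a - b → ζ ^ a = ζ ^ b := by
    rintro a b ⟨k, hk⟩
    rw [show a = b + (4 * q * r) * k by linarith, zpow_add₀ hz0, zpow_mul, hrootz]
    simp
  have hmem : ∀ a : ℤ, ζ ^ a ∈ Subring.closure {ζ} := by
    intro a
    have hpos : (0 : ℤ) < 4 * q * r := by positivity
    rw [hmod a (a % (4 * q * r)) (Int.dvd_self_sub_emod),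
      ← Int.toNat_of_nonneg (Int.emod_nonneg a hpos.ne'), zpow_natCast]
    exact Subring.pow_mem _ (Subring.subset_closure (Set.mem_singleton ζ)) _
  set F : ℤ → ℂ := fun n => ζ ^ (-(m * n ^ 2) - 2 * ((q : ℤ) * l + ε) * n) with hFdef
  have hF : ∀ a b : ℤ, ((2 * q * r : ℕ) : ℤ) ∣ a - b → F a = F b := by
    rintro a b ⟨k, hk⟩
    apply hmod
    push_cast at hk
    rw [show a = b + 2 * q * r * k by linarith]
    exact ⟨-(m * b * k) - m * q * r * k ^ 2 - (q * l + ε) * k, by ring⟩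
  obtain ⟨z, hz, h⟩ := aux_sum_pow (Subring.closure {ζ}) p hp (Finset.Icc 1 (2 * q * r))
    (fun n => ζ ^ (-(m * p * (n : ℤ) ^ 2) - 2 * ((q : ℤ) * l + ε) * (n : ℤ))) (fun n => hmem _)
  refine ⟨z, hz, ?_⟩
  rw [← h]
  congr 1
  haveI : NeZero (2 * q * r) := ⟨hN.ne'⟩
  have e1 := aux_reindex (2 * q * r) p hcop F hF
  have e2 := aux_reindex (2 * q * r) 1 (Nat.coprime_one_right _) F hF
  have e3 := e2
  rw [← e1] at e3
  simp only [Nat.cast_one, one_mul] at e3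
  rw [e3]
  refine Finset.sum_congr rfl fun n _ => ?_
  simp only [hFdef]
  rw [← zpow_natCast, ← zpow_mul]
  congr 1
  ring
end

section
/- Reciprocity for generalized Gauss sums (Siegel's formula, in the form stated in the paper): let α, γ be positive integers and β an integer with αγ + β even. Then Σ_{k=0}^{γ−1} exp(πi(αk² + βk)/γ) = exp(πi/4) · exp(−πiβ²/(4αγ)) · √(γ/α) · Σ_{k=0}^{α−1} exp(−πi(γk² + βk)/α), an identity of complex numbers. -/
open Complex Real
open Filter Topology


lemma auxB {ι : Type*} {l : Filter ι} {a : ι → ℂ} (ha : Tendsto (fun i => (a i).re) l atTop) (b : ℂ) :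
    Tendsto (fun i => ∑' n : ℤ, cexp (-π * a i * n ^ 2 + 2 * π * b * n)) l (𝓝 1) := by
  have key : ∑' n : ℤ, (if n = 0 then (1 : ℂ) else 0) = 1 := tsum_ite_eq 0 _
  rw [← key]
  have hre : ∀ i (n : ℤ), (-π * a i * n ^ 2 + 2 * π * b * n : ℂ).re
      = -π * (a i).re * n ^ 2 + 2 * π * b.re * n := by
    intro i n
    have : (-π * a i * n ^ 2 + 2 * π * b * n : ℂ)
      = ((-π * n ^ 2 : ℝ) : ℂ) * a i + ((2 * π * n : ℝ) : ℂ) * b := by push_cast; ring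
    rw [this, add_re, re_ofReal_mul, re_ofReal_mul]; ring
  refine tendsto_tsum_of_dominated_convergence
    (bound := fun n : ℤ => Real.exp (-π * (1 * n ^ 2 - 2 * ‖b‖ * |n|))) ?_ ?_ ?_
  · simpa using summable_pow_mul_jacobiTheta₂_term_bound ‖b‖ (zero_lt_one) 0
  · intro n
    by_cases hn : n = 0
    · subst hn; simpa using tendsto_const_nhds
    · simp only [hn, if_false]
      rw [tendsto_zero_iff_norm_tendsto_zero]
      simp_rw [Complex.norm_exp, hre]
      refine Real.tendsto_exp_atBot.comp ?_
      refine tendsto_atBot_add_const_right _ _ ?_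
      have hn' : (0 : ℝ) < n ^ 2 := by positivity
      have : Tendsto (fun i => -((a i).re * (π * (n : ℝ) ^ 2))) l atBot :=
        tendsto_neg_atTop_atBot.comp (ha.atTop_mul_const (by positivity))
      refine this.congr fun i => by ring
  · filter_upwards [ha.eventually_ge_atTop 1] with i hi n
    rw [Complex.norm_exp, hre, Real.exp_le_exp]
    have h1 : b.re * n ≤ ‖b‖ * |(n : ℝ)| := by
      calc b.re * n ≤ |b.re * n| := le_abs_self _
        _ = |b.re| * |(n : ℝ)| := abs_mul _ _
        _ ≤ _ := by gcongr; exact abs_re_le_norm b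
    have h2 : (1 : ℝ) * n ^ 2 ≤ (a i).re * n ^ 2 := by gcongr
    push_cast
    nlinarith [Real.pi_pos]

lemma auxS {w : ℂ} (hw : 0 < w.re) (s : ℂ) : Summable (fun n : ℤ => cexp (-π * w * (n + s) ^ 2)) := by
  have := ((summable_jacobiTheta₂_term_iff (I * w * s) (I * w)).2 (by simpa using hw)).mul_left
    (cexp (-π * w * s ^ 2))
  refine this.congr fun n => ?_
  rw [jacobiTheta₂_term, ← Complex.exp_add]
  congr 1
  linear_combination (2 * π * n * w * s + π * n ^ 2 * w) * I_sq

lemma auxPow {x : ℝ} (hx : 0 < x) {z : ℂ} (hz : z ≠ 0) :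
    ((x : ℂ) * z) ^ (1 / 2 : ℂ) = ((√x : ℝ) : ℂ) * z ^ (1 / 2 : ℂ) := by
  have hx' : (x : ℂ) ≠ 0 := by exact_mod_cast hx.ne'
  have h1 : ((√x : ℝ) : ℂ) = (x : ℂ) ^ (1 / 2 : ℂ) := by
    rw [Real.sqrt_eq_rpow, ofReal_cpow hx.le]; push_cast; rfl
  rw [h1, cpow_def_of_ne_zero (mul_ne_zero hx' hz), log_ofReal_mul hx hz, cpow_def_of_ne_zero hx',
    cpow_def_of_ne_zero hz, ← Complex.exp_add, ofReal_log hx.le]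
  ring_nf

lemma auxP {w : ℂ} (hw : 0 < w.re) (s : ℂ) (N : ℕ) (hN : 0 < N) :
    w ^ (1 / 2 : ℂ) * ∑' m : ℤ, cexp (-π * w * (N * m + s) ^ 2) =
    (1 / N) * ∑' n : ℤ, cexp (-π * (1 / (N ^ 2 * w)) * n ^ 2 + 2 * π * (-I * s / N) * n) := by
  have hN' : (N : ℂ) ≠ 0 := by exact_mod_cast hN.ne'
  have hw0 : w ≠ 0 := by rintro rfl; simp at hw
  have hx : 0 < ((N : ℂ) ^ 2 * w).re := by
    have : ((N : ℂ) ^ 2 * w) = ((N ^ 2 : ℝ) : ℂ) * w := by push_cast; ring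
    rw [this, re_ofReal_mul]; positivity
  have hb : 0 < (1 / ((N : ℂ) ^ 2 * w)).re := by
    rw [one_div, inv_re]
    exact div_pos hx (normSq_pos.2 (by intro h; rw [h] at hx; simp at hx))
  rw [Complex.tsum_exp_neg_quadratic hb]
  have hp : (1 / ((N : ℂ) ^ 2 * w)) ^ (1 / 2 : ℂ) = (1 / N) * (1 / w ^ (1 / 2 : ℂ)) := by
    have : (1 / ((N : ℂ) ^ 2 * w)) = (((1 / N) ^ 2 : ℝ) : ℂ) * w⁻¹ := by
      push_cast; field_simp
    rw [this, auxPow (by positivity) (inv_ne_zero hw0), Complex.inv_cpow,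
      Real.sqrt_sq (by positivity)]
    · push_cast; ring
    · intro h
      have := (arg_eq_pi_iff.1 h).1
      linarith
  have hw2 : w ^ (1 / 2 : ℂ) ≠ 0 := by simp [hw0]
  rw [hp, ← mul_assoc]
  congr 1
  · field_simp
  · refine tsum_congr fun n => ?_
    congr 1
    field_simp
    linear_combination (-2 * N * n * s + s ^ 2 * (I ^ 2 - 1)) * I_sq

lemma auxA {ι : Type*} {l : Filter ι} {w : ι → ℂ} (hw : ∀ᶠ i in l, 0 < (w i).re)
    (hw' : Tendsto (fun i => (1 / w i).re) l atTop) (N : ℕ) (hN : 0 < N) (c : ℤ → ℂ)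
    (hc : ∀ n, ‖c n‖ ≤ 1) (hper : ∀ m k : ℤ, c (m * N + k) = c k) (s : ℂ) :
    Tendsto (fun i => w i ^ (1 / 2 : ℂ) * ∑' n : ℤ, c n * cexp (-π * w i * (n + s) ^ 2)) l
      (𝓝 ((1 / N) * ∑ k ∈ Finset.range N, c k)) := by
  have : NeZero N := ⟨hN.ne'⟩
  have hlim : Tendsto (fun i => ∑ k : Fin N, c (k : ℕ) * ((1 / N) *
      ∑' n : ℤ, cexp (-π * (1 / (N ^ 2 * w i)) * n ^ 2
        + 2 * π * (-I * ((k : ℕ) + s) / N) * n))) l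
      (𝓝 (∑ k : Fin N, c (k : ℕ) * ((1 / N) * 1))) := by
    refine tendsto_finsetSum _ fun k _ => ?_
    refine ((auxB ?_ _).const_mul _).const_mul _
    have h1 : (0 : ℝ) < 1 / (N : ℝ) ^ 2 := by positivity
    refine (hw'.const_mul_atTop h1).congr fun i => ?_
    rw [← re_ofReal_mul]
    congr 1
    push_cast
    ring
  have e : ∑ k : Fin N, c (k : ℕ) * ((1 / N) * 1) = (1 / N) * ∑ k ∈ Finset.range N, c k := by
    rw [Finset.sum_range (fun k => c (k : ℕ)), Finset.mul_sum]
    exact Finset.sum_congr rfl fun k _ => by ring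
  rw [← e]
  refine hlim.congr' ?_
  filter_upwards [hw] with i hi
  have hs : Summable (fun n : ℤ => c n * cexp (-π * w i * (n + s) ^ 2)) := by
    refine Summable.of_norm_bounded (auxS hi s).norm fun n => ?_
    rw [norm_mul]
    exact mul_le_of_le_one_left (norm_nonneg _) (hc n)
  have hs2 := ((Equiv.prodComm _ _).trans (Int.divModEquiv N).symm).summable_iff.2 hs
  rw [← ((Equiv.prodComm _ _).trans (Int.divModEquiv N).symm).tsum_eq]
  have := hs2.tsum_prod
  simp only [Function.comp_def] at this
  rw [this, tsum_fintype, Finset.mul_sum]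
  refine Finset.sum_congr rfl fun k _ => ?_
  rw [← auxP hi _ N hN, mul_left_comm, ← tsum_mul_left]
  congr 1
  refine tsum_congr fun m => ?_
  have hv : ((Equiv.prodComm (Fin N) ℤ).trans (Int.divModEquiv N).symm) (k, m)
    = m * N + ((k : ℕ) : ℤ) := rfl
  rw [hv, hper]
  congr 3
  push_cast
  ring

lemma exp_per {x y : ℂ} (m : ℤ) (h : x = y + m * (2 * π * I)) : cexp x = cexp y := by
  rw [h, Complex.exp_periodic.int_mul m y]

theorem stmt_10 (α γ : ℕ) (hα : 0 < α) (hγ : 0 < γ) (β : ℤ)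
    (h : Even ((α : ℤ) * γ + β)) :
    ∑ k ∈ Finset.range γ,
        Complex.exp (Real.pi * Complex.I * ((α : ℂ) * (k : ℂ) ^ 2 + (β : ℂ) * k) / γ)
      = Complex.exp (Real.pi * Complex.I / 4)
        * Complex.exp (-(Real.pi * Complex.I * (β : ℂ) ^ 2) / (4 * α * γ))
        * ((Real.sqrt ((γ : ℝ) / α) : ℝ) : ℂ)
        * ∑ k ∈ Finset.range α,
            Complex.exp (-(Real.pi * Complex.I * ((γ : ℂ) * (k : ℂ) ^ 2 + (β : ℂ) * k)) / α) := by
  have hα' : (α : ℂ) ≠ 0 := by exact_mod_cast hα.ne'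
  have hγ' : (γ : ℂ) ≠ 0 := by exact_mod_cast hγ.ne'
  have hαr : (0 : ℝ) < α := by exact_mod_cast hα
  have hγr : (0 : ℝ) < γ := by exact_mod_cast hγ
  obtain ⟨q, hq⟩ := h
  have hqc : (α : ℂ) * γ + β = q + q := by exact_mod_cast congrArg (Int.cast : ℤ → ℂ) hq
  set c1 : ℤ → ℂ := fun n => cexp (π * I * ((α : ℂ) * (n : ℂ) ^ 2 + (β : ℂ) * n) / γ) with hc1
  set c2 : ℤ → ℂ := fun n => cexp (-(π * I * ((γ : ℂ) * (n : ℂ) ^ 2 + (β : ℂ) * n)) / α) with hc2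
  have n1 : ∀ n, ‖c1 n‖ ≤ 1 := fun n => by
    have : (π * I * ((α : ℂ) * (n : ℂ) ^ 2 + (β : ℂ) * n) / γ)
      = ((π * ((α : ℝ) * n ^ 2 + β * n) / γ : ℝ) : ℂ) * I := by push_cast; ring
    rw [hc1]; simp only [this, norm_exp_ofReal_mul_I, le_refl]
  have n2 : ∀ n, ‖c2 n‖ ≤ 1 := fun n => by
    have : (-(π * I * ((γ : ℂ) * (n : ℂ) ^ 2 + (β : ℂ) * n)) / α)
      = ((-(π * ((γ : ℝ) * n ^ 2 + β * n)) / α : ℝ) : ℂ) * I := by push_cast; ring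
    rw [hc2]; simp only [this, norm_exp_ofReal_mul_I, le_refl]
  -- the difference of the exponents is an even multiple of πi
  have p1 : ∀ m k : ℤ, c1 (m * γ + k) = c1 k := fun m k => by
    obtain ⟨r, hr⟩ := Int.even_mul_succ_self (m - 1)
    have hrc : ((m : ℂ) - 1) * m = r + r := by
      have := congrArg (Int.cast : ℤ → ℂ) hr; push_cast at this; linear_combination this
    refine exp_per (α * γ * r + m * q + α * m * k) ?_
    push_cast
    field_simp
    linear_combination (γ * m) * hqc + (α * γ ^ 2) * hrc
  have p2 : ∀ m k : ℤ, c2 (m * α + k) = c2 k := fun m k => by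
    obtain ⟨r, hr⟩ := Int.even_mul_succ_self (m - 1)
    have hrc : ((m : ℂ) - 1) * m = r + r := by
      have := congrArg (Int.cast : ℤ → ℂ) hr; push_cast at this; linear_combination this
    refine exp_per (-(α * γ * r + m * q + γ * m * k)) ?_
    push_cast
    field_simp
    linear_combination (-α * m) * hqc - (γ * α ^ 2) * hrc
  let a : ℝ → ℂ := fun ε => ε - I * α / γ
  let w : ℝ → ℂ := fun ε => -I * γ * ε / (α * a ε)
  have hane : ∀ ε, a ε ≠ 0 := fun ε h0 => by
    have := congrArg im h0
    have e2 : a ε = ε - ((α / γ : ℝ) : ℂ) * I := by simp only [a]; push_cast; ring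
    rw [e2] at this
    simp at this
    omega
  have hwinv : ∀ ε : ℝ, 0 < ε → 1 / w ε = ((α ^ 2 / γ ^ 2 * ε⁻¹ : ℝ) : ℂ) + ((α / γ : ℝ) : ℂ) * I :=
    fun ε hε => by
    have hε' : (ε : ℂ) ≠ 0 := by exact_mod_cast hε.ne'
    have := hane ε
    have e1 : 1 / w ε = I * α * a ε / (γ * ε) := by
      simp only [w]
      field_simp
      linear_combination -I_sq
    rw [e1]
    simp only [a]
    push_cast
    field_simp
    linear_combination (-α) * I_sq
  have hwinvre : ∀ ε : ℝ, 0 < ε → (1 / w ε).re = α ^ 2 / γ ^ 2 * ε⁻¹ := fun ε hε => by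
    rw [hwinv ε hε, add_re, re_ofReal_mul, ofReal_re, I_re]; ring
  have hwpos : ∀ ε : ℝ, 0 < ε → 0 < (w ε).re := fun ε hε => by
    have h1 : 0 < (1 / w ε).re := by rw [hwinvre ε hε]; positivity
    have h2 : w ε = (1 / w ε)⁻¹ := by simp
    rw [h2, inv_re]
    exact div_pos h1 (normSq_pos.2 (by intro h; rw [h] at h1; simp at h1))
  have hpos : ∀ᶠ ε : ℝ in 𝓝[>] 0, 0 < ε := eventually_mem_nhdsWithin
  have T1 := auxA (l := 𝓝[>] (0 : ℝ)) (w := fun ε => (ε : ℂ))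
    (by filter_upwards [hpos] with ε hε; simpa using hε)
    (by
      refine tendsto_inv_nhdsGT_zero.congr fun ε => ?_
      rw [one_div, ← ofReal_inv, ofReal_re]) γ hγ c1 n1 p1 0
  have T2 := auxA (l := 𝓝[>] (0 : ℝ)) (w := w)
    (by filter_upwards [hpos] with ε hε using hwpos ε hε)
    (by
      have h1 : (0 : ℝ) < α ^ 2 / γ ^ 2 := by positivity
      refine (tendsto_inv_nhdsGT_zero.const_mul_atTop h1).congr' ?_
      filter_upwards [hpos] with ε hε
      rw [hwinvre ε hε]) α hα c2 n2 p2 (β / (2 * γ))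
  -- the functional equation
  set K := cexp (-(π * I * (β : ℂ) ^ 2) / (4 * α * γ)) with hK
  have FE : ∀ ε : ℝ, 0 < ε → ∑' n : ℤ, c1 n * cexp (-π * ε * (n + 0) ^ 2)
      = 1 / a ε ^ (1 / 2 : ℂ) *
        (K * ∑' n : ℤ, c2 n * cexp (-π * w ε * (n + β / (2 * γ)) ^ 2)) := fun ε hε => by
    have hare : 0 < (a ε).re := by
      have e2 : a ε = ε - ((α / γ : ℝ) : ℂ) * I := by simp only [a]; push_cast; ring
      rw [e2, sub_re, re_ofReal_mul]; simpa using hε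
    have := Complex.tsum_exp_neg_quadratic hare (I * β / (2 * γ))
    rw [← (Equiv.neg ℤ).tsum_eq (fun n : ℤ => cexp (-π / a ε * (n + I * (I * β / (2 * γ))) ^ 2))]
      at this
    rw [← tsum_mul_left]
    convert this using 1
    · refine tsum_congr fun n => ?_
      rw [hc1, ← Complex.exp_add]
      congr 1
      simp only [a]
      field_simp
      ring
    · congr 1
      refine tsum_congr fun n => ?_
      rw [hc2, hK, ← Complex.exp_add, ← Complex.exp_add]
      congr 1
      have hw2 : w ε = 1 / a ε - I * γ / α := by
        have := hane ε
        have e3 : (ε : ℂ) = a ε + I * α / γ := by simp only [a]; ring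
        simp only [w]
        rw [e3]
        field_simp
        linear_combination (-α) * I_sq
      have hI : I * (I * β / (2 * γ)) = -(β / (2 * γ) : ℂ) := by
        linear_combination (β / (2 * γ) : ℂ) * I_sq
      rw [hw2, hI]
      simp only [Equiv.neg_apply]
      push_cast
      have := hane ε
      field_simp
      ring
  have R : ∀ ε : ℝ, 0 < ε → w ε ^ (1 / 2 : ℂ) = (ε : ℂ) ^ (1 / 2 : ℂ) *
      (-I * γ / (α * a ε)) ^ (1 / 2 : ℂ) := fun ε hε => by
    have h1 : -I * γ / (α * a ε) ≠ 0 := by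
      have h6 := hane ε
      have h7 : (-I) ≠ 0 := neg_ne_zero.2 I_ne_zero
      positivity
    have h2 : w ε = (ε : ℂ) * (-I * γ / (α * a ε)) := by simp only [w]; ring
    have h3 := auxPow hε one_ne_zero
    rw [one_cpow, mul_one, mul_one] at h3
    rw [h2, auxPow hε h1, h3]
  have ha0 : Tendsto a (𝓝[>] 0) (𝓝 (-I * α / γ)) := by
    have : Continuous a := by fun_prop
    have h := this.tendsto 0
    have e0 : a 0 = -I * α / γ := by simp only [a]; push_cast; ring
    rw [e0] at h
    exact h.mono_left nhdsWithin_le_nhds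
  have hlimv : -I * γ / (α * (-I * α / γ)) = ((γ ^ 2 / α ^ 2 : ℝ) : ℂ) := by
    have := I_ne_zero
    push_cast; field_simp
  have hr0 : Tendsto (fun ε => -I * γ / (α * a ε)) (𝓝[>] 0) (𝓝 ((γ ^ 2 / α ^ 2 : ℝ) : ℂ)) := by
    rw [← hlimv]
    refine tendsto_const_nhds.div (ha0.const_mul _) ?_
    have := I_ne_zero
    have : (-I) ≠ 0 := neg_ne_zero.2 this
    positivity
  have hr1 : Tendsto (fun ε => (-I * γ / (α * a ε)) ^ (1 / 2 : ℂ)) (𝓝[>] 0) (𝓝 ((γ / α : ℝ) : ℂ)) := by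
    have e4 : (((γ ^ 2 / α ^ 2 : ℝ) : ℂ)) ^ (1 / 2 : ℂ) = ((γ / α : ℝ) : ℂ) := by
      have h3 := auxPow (x := γ ^ 2 / α ^ 2) (by positivity) one_ne_zero
      rw [one_cpow, mul_one, mul_one, ← div_pow, Real.sqrt_sq (by positivity)] at h3
      rw [← h3, div_pow]
    rw [← e4]
    refine hr0.cpow tendsto_const_nhds ?_
    rw [ofReal_mem_slitPlane]
    positivity
  have hmI : (-I : ℂ) ^ (1 / 2 : ℂ) = cexp (-(π * I / 4)) := by
    rw [cpow_def_of_ne_zero (neg_ne_zero.2 I_ne_zero), log_neg_I]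
    congr 1; ring
  have ha1 : Tendsto (fun ε => a ε ^ (1 / 2 : ℂ)) (𝓝[>] 0)
      (𝓝 ((√(α / γ : ℝ) : ℝ) * cexp (-(π * I / 4)))) := by
    have e5 : (-I * α / γ : ℂ) = ((α / γ : ℝ) : ℂ) * (-I) := by push_cast; ring
    rw [← hmI, ← auxPow (by positivity) (neg_ne_zero.2 I_ne_zero), ← e5]
    refine ha0.cpow tendsto_const_nhds ?_
    rw [e5, mem_slitPlane_iff]
    right
    rw [im_ofReal_mul]
    simp
    omega
  have E1 := (T1.mul ha1).mul hr1
  have E2 := T2.const_mul K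
  have EE := tendsto_nhds_unique (E1.congr' (by
    filter_upwards [hpos] with ε hε
    have h5 : a ε ^ (1 / 2 : ℂ) ≠ 0 := by simp [hane ε]
    rw [FE ε hε, R ε hε]
    generalize ∑' n : ℤ, c2 n * cexp (-π * w ε * (n + β / (2 * γ)) ^ 2) = X
    generalize (-I * γ / (α * a ε)) ^ (1 / 2 : ℂ) = Y
    field_simp)) E2
  have s1 : ((√(γ / α : ℝ) : ℝ) : ℂ) * ((√(α / γ : ℝ) : ℝ) : ℂ) = 1 := by
    rw [← ofReal_mul, ← Real.sqrt_mul (by positivity)]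
    have : (γ / α * (α / γ) : ℝ) = 1 := by field_simp
    rw [this]; simp
  have s2 : cexp (π * I / 4) * cexp (-(π * I / 4)) = 1 := by
    rw [← Complex.exp_add]; simp
  have g1 : ∑ k ∈ Finset.range γ,
        cexp (π * I * ((α : ℂ) * (k : ℂ) ^ 2 + (β : ℂ) * k) / γ) = ∑ k ∈ Finset.range γ, c1 k := by
    simp [hc1]
  have g2 : ∑ k ∈ Finset.range α,
      cexp (-(π * I * ((γ : ℂ) * (k : ℂ) ^ 2 + (β : ℂ) * k)) / α) = ∑ k ∈ Finset.range α, c2 k := by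
    simp [hc2]
  rw [g1, g2]
  push_cast at EE
  generalize ∑ k ∈ Finset.range γ, c1 k = G1 at *
  generalize ∑ k ∈ Finset.range α, c2 k = G2 at *
  generalize cexp (π * I / 4) = e1 at *
  generalize cexp (-(π * I / 4)) = e2 at *
  generalize ((√(γ / α : ℝ) : ℝ) : ℂ) = r1 at *
  generalize ((√(α / γ : ℝ) : ℝ) : ℂ) = r2 at *
  have EE' : G1 * r2 * e2 = K * G2 := by
    field_simp at EE
    linear_combination EE
  linear_combination (e1 * r1) * EE' - G1 * e1 * e2 * s1 - G1 * s2
end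

section
/- Let m, q, r be positive integers, l an integer, and ε ∈ {+1, −1}. Writing ξ_a = exp(2πi/a), one has Σ_{n=1}^{m} ξ_m^{(qr)n² + (ql+ε)n} = ξ_8 · ξ_{16mqr}^{−4(ql+ε)²} · √(m/(2qr)) · Σ_{n=1}^{2qr} ξ_{4qr}^{−mn² − 2(ql+ε)n}, an identity of complex numbers. (The rewritten Gauss sum identity displayed in Section 5 of the paper.) -/
open Complex Real Filter Topology

lemma aux_half_mul {x : ℝ} (hx : 0 < x) {w : ℂ} (hw : w ≠ 0) :
    ((x : ℂ) * w) ^ (1 / 2 : ℂ) = (Real.sqrt x : ℂ) * w ^ (1 / 2 : ℂ) := by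
  have hx' : (x : ℂ) ≠ 0 := by exact_mod_cast hx.ne'
  rw [Complex.cpow_def_of_ne_zero (mul_ne_zero hx' hw), Complex.log_ofReal_mul hx hw,
    add_mul, Complex.exp_add, ← Complex.cpow_def_of_ne_zero hw, Real.sqrt_eq_rpow,
    Complex.ofReal_cpow hx.le, Complex.cpow_def_of_ne_zero hx', Complex.ofReal_log hx.le]
  push_cast
  rfl

lemma aux_theta_lim {ι : Type*} {l : Filter ι} (x : ℝ) (T : ι → ℂ)
    (hT : Tendsto (fun i => (T i).im) l atTop) :
    Tendsto (fun i => jacobiTheta₂ (x : ℂ) (T i)) l (𝓝 1) := by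
  have h1 : (1 : ℂ) = ∑' n : ℤ, if n = 0 then 1 else 0 := by rw [tsum_ite_eq]
  rw [h1]
  unfold jacobiTheta₂
  have hb := summable_pow_mul_jacobiTheta₂_term_bound 0 one_pos 0
  refine tendsto_tsum_of_dominated_convergence hb ?_ ?_
  · intro n
    by_cases hn : n = 0
    · subst hn
      simp only [jacobiTheta₂_term, Int.cast_zero, mul_zero, zero_mul, ne_eq, OfNat.ofNat_ne_zero,
        not_false_eq_true, zero_pow, add_zero, Complex.exp_zero, if_true]
      exact tendsto_const_nhds
    · simp only [hn, if_false]
      rw [tendsto_zero_iff_norm_tendsto_zero]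
      simp only [norm_jacobiTheta₂_term, Complex.ofReal_im, mul_zero, sub_zero]
      refine Real.tendsto_exp_atBot.comp ?_
      refine Tendsto.const_mul_atTop_of_neg ?_ hT
      have : (0 : ℝ) < (n : ℝ) ^ 2 := by positivity
      nlinarith [Real.pi_pos]
  · filter_upwards [hT.eventually_ge_atTop 1] with i hi n
    have := norm_jacobiTheta₂_term_le one_pos (z := (x : ℂ)) (S := 0) (by simp) hi n
    simpa using this

lemma aux_split (N : ℕ) [NeZero N] (f : ℤ → ℂ) (hf : ∀ r k : ℤ, f (k * N + r) = f r)
    (c : ℝ) (δ z τ : ℂ) (hδ : 0 < δ.im) (hτ : 0 < τ.im)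
    (h : ∀ n : ℤ, jacobiTheta₂_term n z τ
      = f n * Complex.exp (π * I * δ * ((n : ℂ) ^ 2 + 2 * c * n))) :
    (-I * δ) ^ (1 / 2 : ℂ) * jacobiTheta₂ z τ = 1 / N * Complex.exp (-π * I * c ^ 2 * δ) *
      ∑ r : Fin N, f (r : ℕ) * jacobiTheta₂ (((((r : ℕ) : ℝ) + c) / N : ℝ) : ℂ)
        (-1 / ((N : ℂ) ^ 2 * δ)) := by
  have hN : (N : ℂ) ≠ 0 := by exact_mod_cast NeZero.ne N
  have hNr : (0 : ℝ) < N := by exact_mod_cast Nat.pos_of_ne_zero (NeZero.ne N)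
  have hδ0 : δ ≠ 0 := by rintro rfl; simp at hδ
  have hc : (-I * δ) ^ (1 / 2 : ℂ) ≠ 0 := by
    simp [Complex.cpow_eq_zero_iff, hδ0]
  have hs := (summable_jacobiTheta₂_term_iff z τ).mpr hτ
  have hs2 := (Equiv.summable_iff (((Int.divModEquiv N).trans (Equiv.prodComm _ _)).symm)).mpr hs
  have e1 : jacobiTheta₂ z τ = ∑ r : Fin N, ∑' k : ℤ,
      jacobiTheta₂_term (k * N + (r : ℕ)) z τ := by
    rw [jacobiTheta₂,
      ← Equiv.tsum_eq (((Int.divModEquiv N).trans (Equiv.prodComm _ _)).symm)]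
    refine (Summable.tsum_prod hs2).trans ?_
    rw [tsum_fintype]
    rfl
  have e2 : ∀ r : Fin N, ∑' k : ℤ, jacobiTheta₂_term (k * N + (r : ℕ)) z τ =
      f (r : ℕ) * Complex.exp (π * I * δ * (((r : ℕ) : ℂ) ^ 2 + 2 * c * (r : ℕ))) *
        jacobiTheta₂ (N * δ * ((r : ℕ) + c)) (N ^ 2 * δ) := by
    intro r
    rw [jacobiTheta₂, ← tsum_mul_left]
    refine tsum_congr fun k => ?_
    rw [h, hf, jacobiTheta₂_term, mul_assoc (f _), ← Complex.exp_add]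
    congr 2
    push_cast
    ring
  rw [e1, Finset.mul_sum, Finset.mul_sum]
  refine Finset.sum_congr rfl fun r _ => ?_
  rw [e2, jacobiTheta₂_functional_equation]
  have a1 : -I * ((N : ℂ) ^ 2 * δ) = (((N : ℝ) ^ 2 : ℝ) : ℂ) * (-I * δ) := by push_cast; ring
  rw [a1, aux_half_mul (by positivity) (by simp [hδ0]), Real.sqrt_sq hNr.le]
  have a2 : (N : ℂ) * δ * ((r : ℕ) + c) / (N ^ 2 * δ)
      = (((((r : ℕ) : ℝ) + c) / N : ℝ) : ℂ) := by
    push_cast; field_simp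
  have a3 : Complex.exp (-π * I * c ^ 2 * δ) =
      Complex.exp (π * I * δ * (((r : ℕ) : ℂ) ^ 2 + 2 * c * (r : ℕ))) *
      Complex.exp (-π * I * (N * δ * ((r : ℕ) + c)) ^ 2 / (N ^ 2 * δ)) := by
    rw [← Complex.exp_add]
    congr 1
    field_simp
    ring
  rw [a2, a3]
  push_cast
  field_simp

lemma aux_lim {ι : Type*} {l : Filter ι} (N : ℕ) [NeZero N] (f : ℤ → ℂ)
    (hf : ∀ r k : ℤ, f (k * N + r) = f r) (c : ℝ) (δ z τ : ι → ℂ)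
    (hδ : ∀ᶠ i in l, 0 < (δ i).im) (hτ : ∀ᶠ i in l, 0 < (τ i).im)
    (hδ0 : Tendsto δ l (𝓝 0)) (hδi : Tendsto (fun i => (-1 / δ i).im) l atTop)
    (h : ∀ᶠ i in l, ∀ n : ℤ, jacobiTheta₂_term n (z i) (τ i)
      = f n * Complex.exp (π * I * δ i * ((n : ℂ) ^ 2 + 2 * c * n))) :
    Tendsto (fun i => (-I * δ i) ^ (1 / 2 : ℂ) * jacobiTheta₂ (z i) (τ i)) l
      (𝓝 (1 / N * ∑ r : Fin N, f (r : ℕ))) := by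
  have hNr : (0 : ℝ) < N := by exact_mod_cast Nat.pos_of_ne_zero (NeZero.ne N)
  have key : Tendsto (fun i => 1 / N * Complex.exp (-π * I * c ^ 2 * δ i) *
      ∑ r : Fin N, f (r : ℕ) * jacobiTheta₂ (((((r : ℕ) : ℝ) + c) / N : ℝ) : ℂ)
        (-1 / ((N : ℂ) ^ 2 * δ i))) l
      (𝓝 (1 / N * Complex.exp (-π * I * c ^ 2 * 0) * ∑ r : Fin N, f (r : ℕ) * 1)) := by
    refine Tendsto.mul ?_ ?_
    · exact (Complex.continuous_exp.tendsto _ |>.comp (hδ0.const_mul _)).const_mul _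
    · refine tendsto_finsetSum _ fun r _ => ?_
      refine (aux_theta_lim _ _ ?_).const_mul _
      have : (fun i => (-1 / ((N : ℂ) ^ 2 * δ i)).im)
          = fun i => (((N : ℝ) ^ 2)⁻¹) * (-1 / δ i).im := by
        funext i
        rw [← Complex.im_ofReal_mul]
        congr 1
        push_cast
        rw [div_mul_eq_div_div_swap, div_eq_inv_mul]
      rw [this]
      exact hδi.const_mul_atTop (by positivity)
  simp only [mul_zero, Complex.exp_zero, mul_one] at key
  refine key.congr' ?_
  filter_upwards [hδ, hτ, h] with i h1 h2 h3
  exact (aux_split N f hf c (δ i) (z i) (τ i) h1 h2 h3).symm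

lemma aux_main_s11 (m p : ℕ) (hm : 0 < m) (hp : 0 < p) (B : ℤ) :
    (1 / (m : ℂ) * ∑ n : Fin m,
        Complex.exp (2 * π * I / m * (p * ((n : ℕ) : ℤ) ^ 2 + B * ((n : ℕ) : ℤ)))) *
      ((((m : ℝ) / (2 * p) : ℝ) : ℂ) * (((Real.sqrt (2 * p / m) : ℝ) : ℂ) * (-I) ^ (1 / 2 : ℂ)))
    = Complex.exp (-π * I * ((B : ℂ) / m) ^ 2 / (((2 * p / m : ℝ)) : ℂ)) *
      (1 / ((2 * p : ℕ) : ℂ) * ∑ n : Fin (2 * p),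
        Complex.exp (2 * π * I / (4 * p) * (-m * ((n : ℕ) : ℤ) ^ 2 - 2 * B * ((n : ℕ) : ℤ)))) := by
  have hm0 : (m : ℂ) ≠ 0 := by exact_mod_cast hm.ne'
  have hp0 : (p : ℂ) ≠ 0 := by exact_mod_cast hp.ne'
  have hmr : (0 : ℝ) < m := by exact_mod_cast hm
  have hpr : (0 : ℝ) < p := by exact_mod_cast hp
  have : NeZero m := ⟨hm.ne'⟩
  have : NeZero (2 * p) := ⟨by omega⟩
  set a : ℝ := 2 * p / m with ha
  have ha0 : 0 < a := by positivity
  have haC : (a : ℂ) = 2 * p / m := by rw [ha]; push_cast; rfl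
  let τ : ℝ → ℂ := fun t => a + I * t
  have hτre : ∀ t, (τ t).re = a := fun t => by simp [τ]
  have hτim : ∀ t, (τ t).im = t := fun t => by simp [τ]
  have hτ0 : ∀ t, τ t ≠ 0 := fun t h => by
    have := hτre t; rw [h] at this; simp at this; exact ha0.ne this
  have hτn : ∀ t, 0 < Complex.normSq (τ t) := fun t => Complex.normSq_pos.mpr (hτ0 t)
  let δ : ℝ → ℂ := fun t => ((t / a : ℝ) : ℂ) * (I * (τ t)⁻¹)
  have hτlim : Tendsto τ (𝓝[>] 0) (𝓝 (a : ℂ)) := by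
    have : Continuous τ := by fun_prop
    have h := (this.tendsto 0).mono_left (nhdsWithin_le_nhds (s := Set.Ioi 0))
    simpa [τ] using h
  have hpos : ∀ᶠ t : ℝ in 𝓝[>] 0, 0 < t := eventually_mem_nhdsWithin
  have haC0 : (a : ℂ) ≠ 0 := by exact_mod_cast ha0.ne'
  -- first side
  have L1 := aux_lim (l := 𝓝[>] (0 : ℝ)) m
    (fun n : ℤ => Complex.exp (2 * π * I / m * (p * (n : ℂ) ^ 2 + B * (n : ℂ)))) (by
      intro r k
      have : 2 * π * I / m * (p * ((k * m + r : ℤ) : ℂ) ^ 2 + B * ((k * m + r : ℤ) : ℂ))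
        = 2 * π * I / m * (p * (r : ℂ) ^ 2 + B * (r : ℂ))
          + ((p * (k ^ 2 * m + 2 * k * r) + B * k : ℤ) : ℂ) * (2 * π * I) := by
        push_cast; field_simp; ring
      simp only [this, Complex.exp_add, Complex.exp_int_mul_two_pi_mul_I, mul_one])
    0 (fun t => I * t) (fun _ => (B : ℂ) / m) τ
    (by filter_upwards [hpos] with t ht; simpa using ht)
    (by filter_upwards [hpos] with t ht; rw [hτim]; exact ht)
    (by
      have : Continuous (fun t : ℝ => I * (t : ℂ)) := by fun_prop
      have h := (this.tendsto 0).mono_left (nhdsWithin_le_nhds (s := Set.Ioi 0))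
      simpa using h)
    (by
      refine tendsto_inv_nhdsGT_zero.congr fun t => ?_
      have : -1 / (I * (t : ℂ)) = I * ((t⁻¹ : ℝ) : ℂ) := by
        push_cast
        rw [div_eq_mul_inv, mul_inv, Complex.inv_I]; ring
      rw [this]; simp)
    (by
      refine Eventually.of_forall fun t n => ?_
      rw [jacobiTheta₂_term, ← Complex.exp_add]
      congr 1
      simp only [τ, haC]
      push_cast; field_simp; ring)
  have L2 := aux_lim (l := 𝓝[>] (0 : ℝ)) (2 * p)
    (fun n : ℤ => Complex.exp (2 * π * I / (4 * p) * (-m * (n : ℂ) ^ 2 - 2 * B * (n : ℂ)))) (by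
      intro r k
      have : 2 * π * I / (4 * p) * (-m * ((k * (2 * p : ℕ) + r : ℤ) : ℂ) ^ 2
            - 2 * B * ((k * (2 * p : ℕ) + r : ℤ) : ℂ))
        = 2 * π * I / (4 * p) * (-m * (r : ℂ) ^ 2 - 2 * B * (r : ℂ))
          + ((-m * (k ^ 2 * p + k * r) - B * k : ℤ) : ℂ) * (2 * π * I) := by
        push_cast; field_simp; ring
      simp only [this, Complex.exp_add, Complex.exp_int_mul_two_pi_mul_I, mul_one])
    (B / m) δ (fun t => -((B : ℂ) / m / τ t)) (fun t => -1 / τ t)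
    (by
      filter_upwards [hpos] with t ht
      simp only [δ]
      rw [Complex.im_ofReal_mul, Complex.I_mul_im, Complex.inv_re, hτre]
      have := hτn t
      positivity)
    (by
      filter_upwards [hpos] with t ht
      rw [neg_div, one_div, Complex.neg_im, Complex.inv_im, hτim, neg_div, neg_neg]
      have := hτn t
      positivity)
    (by
      have h1 : Tendsto (fun t : ℝ => ((t / a : ℝ) : ℂ)) (𝓝[>] 0) (𝓝 0) := by
        have : Continuous (fun t : ℝ => ((t / a : ℝ) : ℂ)) := by fun_prop
        have h := (this.tendsto 0).mono_left (nhdsWithin_le_nhds (s := Set.Ioi 0))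
        simpa using h
      have h2 := h1.mul ((hτlim.inv₀ haC0).const_mul I)
      rw [zero_mul] at h2
      exact h2)
    (by
      have : Tendsto (fun t : ℝ => a ^ 2 * t⁻¹) (𝓝[>] 0) atTop :=
        tendsto_inv_nhdsGT_zero.const_mul_atTop (by positivity)
      refine this.congr fun t => ?_
      have h1 : -1 / δ t = ((a * t⁻¹ : ℝ) : ℂ) * (I * τ t) := by
        simp only [δ]
        push_cast
        rw [div_eq_mul_inv, mul_inv, mul_inv, Complex.inv_I, inv_inv, inv_div]; ring
      rw [h1, Complex.im_ofReal_mul, Complex.I_mul_im, hτre]; ring)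
    (by
      refine Eventually.of_forall fun t n => ?_
      rw [jacobiTheta₂_term, ← Complex.exp_add]
      congr 1
      have h0 := hτ0 t
      have h3 : I * (t : ℂ) = τ t - a := by simp [τ]
      have h4 : δ t = (τ t - a) / (a * τ t) := by
        rw [← h3]; simp only [δ]; push_cast; field_simp
      rw [h4, haC]
      push_cast; field_simp; ring)
  have hQ1 : Tendsto (fun t => (((a : ℂ)) * τ t)⁻¹ ^ (1 / 2 : ℂ)) (𝓝[>] 0)
      (𝓝 ((((m : ℝ) / (2 * p) : ℝ) : ℂ))) := by
    have e : (((m : ℝ) / (2 * p) : ℝ) : ℂ) = (((a : ℂ)) * a)⁻¹ ^ (1 / 2 : ℂ) := by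
      have : (((a : ℂ)) * a)⁻¹ = ((((a⁻¹) ^ 2 : ℝ)) : ℂ) * 1 := by push_cast; field_simp
      rw [this, aux_half_mul (by positivity) one_ne_zero, Real.sqrt_sq (by positivity),
        Complex.one_cpow, mul_one, ha, inv_div]
    rw [e]
    refine Tendsto.cpow ?_ tendsto_const_nhds ?_
    · exact (hτlim.const_mul _).inv₀ (mul_ne_zero haC0 haC0)
    · rw [Complex.mem_slitPlane_iff]
      left
      have : (((a : ℂ)) * a)⁻¹ = ((((a * a)⁻¹ : ℝ)) : ℂ) := by push_cast; rfl
      rw [this, Complex.ofReal_re]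
      positivity
  have hQ2 : Tendsto (fun t => (-I * τ t) ^ (1 / 2 : ℂ)) (𝓝[>] 0)
      (𝓝 ((((Real.sqrt a : ℝ) : ℂ) * (-I) ^ (1 / 2 : ℂ)))) := by
    rw [← aux_half_mul ha0 (by simp), mul_comm (a : ℂ)]
    refine Tendsto.cpow (hτlim.const_mul _) tendsto_const_nhds ?_
    rw [Complex.mem_slitPlane_iff]
    right
    simpa using ha0.ne'
  have hQ3 : Tendsto (fun t => Complex.exp (-π * I * ((B : ℂ) / m) ^ 2 / τ t)) (𝓝[>] 0)
      (𝓝 (Complex.exp (-π * I * ((B : ℂ) / m) ^ 2 / a))) :=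
    (Complex.continuous_exp.tendsto _).comp (tendsto_const_nhds.div hτlim haC0)
  have R1 := L1.mul (hQ1.mul hQ2)
  have R2 := hQ3.mul L2
  have R := tendsto_nhds_unique (R1.congr' ?_) R2
  · exact R
  filter_upwards [hpos] with t ht
  have h0 := hτ0 t
  have ht0 : (t : ℂ) ≠ 0 := by exact_mod_cast ht.ne'
  have b1 : -I * (I * (t : ℂ)) = ((t : ℝ) : ℂ) * 1 := by
    rw [← mul_assoc]; simp
  have b2 : -I * δ t = (t : ℂ) * (a * τ t)⁻¹ := by
    simp only [δ]; push_cast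
    rw [mul_inv]
    linear_combination (-(t / a : ℂ) * (τ t)⁻¹) * Complex.I_mul_I
  rw [b1, b2, aux_half_mul ht one_ne_zero, aux_half_mul ht (by simp [haC0, h0]),
    Complex.one_cpow, mul_one, jacobiTheta₂_neg_left,
    jacobiTheta₂_functional_equation ((B : ℂ) / m) (τ t)]
  have hc : (-I * τ t) ^ (1 / 2 : ℂ) ≠ 0 := by
    simp [Complex.cpow_eq_zero_iff, h0]
  field_simp

lemma aux_sum_s11 (N : ℕ) (hN : 0 < N) (g : ℕ → ℂ) (h : g N = g 0) :
    ∑ n ∈ Finset.Icc 1 N, g n = ∑ n : Fin N, g n := by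
  rw [Fin.sum_univ_eq_sum_range g N]
  have e : Finset.Icc 1 N = Finset.Ico 1 (N + 1) := by ext; simp only [Finset.mem_Icc, Finset.mem_Ico]; omega
  rw [e, Finset.sum_Ico_eq_sum_range]
  obtain ⟨k, rfl⟩ : ∃ k, N = k + 1 := ⟨N - 1, by omega⟩
  rw [Finset.sum_range_succ' g, ← h]
  simp only [Nat.add_sub_cancel]
  rw [Finset.sum_range_succ]
  simp only [add_comm 1]

/-- The rewritten Gauss sum identity of Section 5: with `ξ_a = exp(2πi/a)`,
`Σ_{n=1}^{m} ξ_m^{qrn² + (ql+ε)n}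
  = ξ_8 · ξ_{16mqr}^{-4(ql+ε)²} · √(m/(2qr)) · Σ_{n=1}^{2qr} ξ_{4qr}^{-mn² - 2(ql+ε)n}`. -/
theorem stmt_11 (m q r : ℕ) (hm : 0 < m) (hq : 0 < q) (hr : 0 < r)
    (l ε : ℤ) (hε : ε = 1 ∨ ε = -1) :
    ∑ n ∈ Finset.Icc 1 m,
        (Complex.exp (2 * Real.pi * Complex.I / m))
          ^ ((q : ℤ) * r * (n : ℤ) ^ 2 + ((q : ℤ) * l + ε) * (n : ℤ))
      = Complex.exp (2 * Real.pi * Complex.I / 8)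
        * (Complex.exp (2 * Real.pi * Complex.I / (16 * m * q * r)))
            ^ (-(4 * ((q : ℤ) * l + ε) ^ 2))
        * ((Real.sqrt ((m : ℝ) / (2 * q * r)) : ℝ) : ℂ)
        * ∑ n ∈ Finset.Icc 1 (2 * q * r),
            (Complex.exp (2 * Real.pi * Complex.I / (4 * q * r)))
              ^ (-(m : ℤ) * (n : ℤ) ^ 2 - 2 * ((q : ℤ) * l + ε) * (n : ℤ)) := by
  set B : ℤ := (q : ℤ) * l + ε with hB
  have hp : 0 < q * r := Nat.mul_pos hq hr
  have M := aux_main_s11 m (q * r) hm hp B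
  have hm0 : (m : ℂ) ≠ 0 := by exact_mod_cast hm.ne'
  have hq0 : (q : ℂ) ≠ 0 := by exact_mod_cast hq.ne'
  have hr0 : (r : ℂ) ≠ 0 := by exact_mod_cast hr.ne'
  have hmr : (0 : ℝ) < m := by exact_mod_cast hm
  have hqr : (0 : ℝ) < q := by exact_mod_cast hq
  have hrr : (0 : ℝ) < r := by exact_mod_cast hr
  have S1 : ∑ n ∈ Finset.Icc 1 m, (Complex.exp (2 * Real.pi * Complex.I / m))
        ^ ((q : ℤ) * r * (n : ℤ) ^ 2 + B * (n : ℤ)) = ∑ n : Fin m,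
        Complex.exp (2 * π * I / m * ((q * r : ℕ) * ((n : ℕ) : ℤ) ^ 2 + B * ((n : ℕ) : ℤ))) := by
    rw [← aux_sum_s11 m hm (fun n : ℕ =>
      Complex.exp (2 * π * I / m * ((q * r : ℕ) * (n : ℤ) ^ 2 + B * (n : ℤ))))]
    · refine Finset.sum_congr rfl fun n _ => ?_
      rw [← Complex.exp_int_mul]
      congr 1
      push_cast; ring
    · have : 2 * π * I / m * ((q * r : ℕ) * ((m : ℕ) : ℤ) ^ 2 + B * ((m : ℕ) : ℤ))
          = ((q * r * m + B : ℤ) : ℂ) * (2 * π * I) := by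
        push_cast; field_simp
      simp only [this, Complex.exp_int_mul_two_pi_mul_I]
      simp
  have S2 : ∑ n ∈ Finset.Icc 1 (2 * q * r), (Complex.exp (2 * Real.pi * Complex.I / (4 * q * r)))
        ^ (-(m : ℤ) * (n : ℤ) ^ 2 - 2 * B * (n : ℤ)) = ∑ n : Fin (2 * (q * r)),
        Complex.exp (2 * π * I / (4 * (q * r : ℕ)) *
          (-m * ((n : ℕ) : ℤ) ^ 2 - 2 * B * ((n : ℕ) : ℤ))) := by
    rw [← aux_sum_s11 (2 * (q * r)) (by omega) (fun n : ℕ =>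
      Complex.exp (2 * π * I / (4 * (q * r : ℕ)) * (-m * (n : ℤ) ^ 2 - 2 * B * (n : ℤ)))), mul_assoc 2 q r]
    · refine Finset.sum_congr rfl fun n _ => ?_
      rw [← Complex.exp_int_mul]
      congr 1
      push_cast; ring
    · have : 2 * π * I / (4 * (q * r : ℕ)) * (-m * ((2 * (q * r) : ℕ) : ℤ) ^ 2
            - 2 * B * ((2 * (q * r) : ℕ) : ℤ))
          = ((-m * (q * r) - B : ℤ) : ℂ) * (2 * π * I) := by
        push_cast; field_simp; ring
      simp only [this, Complex.exp_int_mul_two_pi_mul_I]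
      simp
  rw [S1, S2]
  set X := ∑ n : Fin m,
        Complex.exp (2 * π * I / m * ((q * r : ℕ) * ((n : ℕ) : ℤ) ^ 2 + B * ((n : ℕ) : ℤ)))
  set Y := ∑ n : Fin (2 * (q * r)),
        Complex.exp (2 * π * I / (4 * (q * r : ℕ)) *
          (-m * ((n : ℕ) : ℤ) ^ 2 - 2 * B * ((n : ℕ) : ℤ)))
  have hE : (Complex.exp (2 * Real.pi * Complex.I / (16 * m * q * r))) ^ (-(4 * B ^ 2))
      = Complex.exp (-π * I * ((B : ℂ) / m) ^ 2 / (((2 * (q * r : ℕ) / m : ℝ)) : ℂ)) := by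
    rw [← Complex.exp_int_mul]
    congr 1
    push_cast; field_simp; ring
  have hI : Complex.exp (2 * Real.pi * Complex.I / 8) * (-I) ^ (1 / 2 : ℂ) = 1 := by
    rw [Complex.cpow_def_of_ne_zero (by simp), Complex.log_neg_I, ← Complex.exp_add]
    have : 2 * (π : ℂ) * I / 8 + -(π / 2) * I * (1 / 2) = 0 := by ring
    rw [this, Complex.exp_zero]
  have hsq : ((Real.sqrt ((m : ℝ) / (2 * q * r)) : ℝ) : ℂ)
      * ((Real.sqrt (2 * (q * r : ℕ) / m) : ℝ) : ℂ) = 1 := by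
    rw [← Complex.ofReal_mul, ← Real.sqrt_mul (by positivity)]
    have : (m : ℝ) / (2 * q * r) * (2 * (q * r : ℕ) / m) = 1 := by
      push_cast; field_simp
    rw [this]; simp
  rw [hE]
  set s := ((Real.sqrt ((m : ℝ) / (2 * q * r)) : ℝ) : ℂ)
  set s' := ((Real.sqrt (2 * (q * r : ℕ) / m) : ℝ) : ℂ)
  set E := Complex.exp (-π * I * ((B : ℂ) / m) ^ 2 / (((2 * (q * r : ℕ) / m : ℝ)) : ℂ))
  set u := Complex.exp (2 * Real.pi * Complex.I / 8)
  set v := (-I) ^ (1 / 2 : ℂ)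
  have M2 : X * (s' * v) = E * Y := by
    push_cast at M
    field_simp at M
    linear_combination M
  calc X = X * (s * s') * (u * v) := by rw [hsq, hI]; ring
    _ = u * s * (X * (s' * v)) := by ring
    _ = u * E * s * Y := by rw [M2]; ring
end

section
/- Let p be an odd prime and let m, q be positive integers with q coprime to mp. Then the rational number E = 12·s(q,m) − 12p·s(q,mp) is an integer, and exp(2πi(3 − 3p + E)/8) equals the Legendre symbol (q/p), viewed as the complex number 1 or −1. (Equation (5.2), the main arithmetic identity proved in Section 5 of the paper; the integrality of E is the paper's integrality of three times the signature defect of L(m,q) → L(mp,q).) -/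
open Complex Real

/-- The sawtooth function `((x))`: `x - ⌊x⌋ - 1/2` for non-integral `x`,
and `0` for integral `x`. -/
def saw (x : ℚ) : ℚ := if x.den = 1 then 0 else x - ⌊x⌋ - 1 / 2

/-- The Dedekind sum `s(h,k) = Σ_{j=1}^{k-1} ((j/k))·((hj/k))`. -/
def dedekindSum (h k : ℕ) : ℚ :=
  ∑ j ∈ Finset.Icc 1 (k - 1), saw ((j : ℚ) / k) * saw ((h : ℚ) * j / k)

/-- floor sum -/
def fsum (h k : ℕ) : ℤ := ∑ j ∈ Finset.range k, (j : ℤ) * ((h * j / k : ℕ) : ℤ)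

/-- twelve k times the Dedekind sum -/
def nsum (h k : ℕ) : ℤ := 2 * h * (k - 1) * (2 * k - 1) - 12 * fsum h k - 3 * k * (k - 1)

lemma sum_sq6 (k : ℕ) : 6 * ∑ j ∈ Finset.range k, (j : ℤ) ^ 2 = (k - 1) * k * (2 * k - 1) := by
  induction k with
  | zero => simp
  | succ n ih => rw [Finset.sum_range_succ, mul_add, ih]; push_cast; ring

lemma sum_lin2 (k : ℕ) : 2 * ∑ j ∈ Finset.range k, (j : ℤ) = (k - 1) * k := by
  induction k with
  | zero => simp
  | succ n ih => rw [Finset.sum_range_succ, mul_add, ih]; push_cast; ring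

lemma perm_sum (h k : ℕ) (hk : 0 < k) (hc : Nat.Coprime h k) (f : ℕ → ℤ) :
    ∑ j ∈ Finset.range k, f (h * j % k) = ∑ j ∈ Finset.range k, f j := by
  have hmaps : ∀ j ∈ Finset.range k, h * j % k ∈ Finset.range k := fun j _ =>
    Finset.mem_range.2 (Nat.mod_lt _ hk)
  have hinj : Set.InjOn (fun j => h * j % k) (Finset.range k : Set ℕ) := by
    intro a ha b hb hab
    have ha' : a < k := by simpa using ha
    have hb' : b < k := by simpa using hb
    have h1 : h * a ≡ h * b [MOD k] := hab
    have h2 : a ≡ b [MOD k] := Nat.ModEq.cancel_left_of_coprime (by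
      rw [Nat.gcd_comm]; exact hc) h1
    exact Nat.ModEq.eq_of_lt_of_lt h2 ha' hb'
  have himg : (Finset.range k).image (fun j => h * j % k) = Finset.range k := by
    apply Finset.eq_of_subset_of_card_le
    · intro x hx
      obtain ⟨j, hj, rfl⟩ := Finset.mem_image.1 hx
      exact hmaps j hj
    · rw [Finset.card_image_of_injOn hinj]
  conv_rhs => rw [← himg]
  rw [Finset.sum_image hinj]

lemma sum_two_i (a : ℕ) : ∑ i ∈ Finset.range (a + 1), 2 * (i : ℤ) = (a : ℤ) ^ 2 + a := by
  induction a with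
  | zero => simp
  | succ n ih => rw [Finset.sum_range_succ, ih]; push_cast; ring

/-- double counting -/
lemma double_count (h k : ℕ) (hh : 0 < h) (hk : 0 < k) (hc : Nat.Coprime h k) :
    ∑ j ∈ Finset.range k, (((h * j / k : ℕ) : ℤ) ^ 2 + ((h * j / k : ℕ) : ℤ))
      = (h : ℤ) * (h - 1) * (k - 1) - 2 * fsum k h := by
  have e1 : ∀ j ∈ Finset.range k, (((h * j / k : ℕ) : ℤ) ^ 2 + ((h * j / k : ℕ) : ℤ))
      = ∑ i ∈ Finset.range h, if k * i ≤ h * j then 2 * (i : ℤ) else 0 := by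
    intro j hj
    have hj' := Finset.mem_range.1 hj
    rw [← sum_two_i, ← Finset.sum_filter]
    apply Finset.sum_congr _ (fun _ _ => rfl)
    ext i
    simp only [Finset.mem_range, Finset.mem_filter, Nat.lt_succ_iff, Nat.le_div_iff_mul_le hk]
    constructor
    · intro hi
      refine ⟨?_, by linarith [mul_comm i k]⟩
      by_contra hcon
      push Not at hcon
      nlinarith
    · rintro ⟨_, hi⟩
      linarith [mul_comm i k]
  rw [Finset.sum_congr rfl e1, Finset.sum_comm]
  have e2 : ∀ i ∈ Finset.range h, (∑ j ∈ Finset.range k, if k * i ≤ h * j then 2 * (i : ℤ) else 0)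
      = 2 * ((k - 1) * (i : ℤ)) - 2 * ((i : ℤ) * ((k * i / h : ℕ) : ℤ)) := by
    intro i hi
    have hi' := Finset.mem_range.1 hi
    rcases Nat.eq_zero_or_pos i with rfl | hipos
    · simp
    have hlt : k * i / h < k := by
      rw [Nat.div_lt_iff_lt_mul hh]; nlinarith
    rw [← Finset.sum_filter]
    have : (Finset.range k).filter (fun j => k * i ≤ h * j) = Finset.Ico (k * i / h + 1) k := by
      ext j
      simp only [Finset.mem_range, Finset.mem_filter, Finset.mem_Ico, Nat.succ_le_iff,
        Nat.div_lt_iff_lt_mul hh]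
      constructor
      · rintro ⟨h1, h2⟩
        refine ⟨?_, h1⟩
        rcases Nat.lt_or_ge (k * i) (j * h) with h3 | h3
        · exact h3
        · exfalso
          have h4 : k * i = h * j := by linarith [mul_comm j h]
          have h5 : h ∣ k * i := ⟨j, h4⟩
          have h6 : h ∣ i := Nat.Coprime.dvd_of_dvd_mul_left hc h5
          exact absurd (Nat.le_of_dvd hipos h6) (by omega)
      · rintro ⟨h1, h2⟩
        exact ⟨h2, by linarith [mul_comm j h]⟩
    rw [this, Finset.sum_const, Nat.card_Ico, nsmul_eq_mul, Nat.cast_sub (by omega)]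
    push_cast
    ring
  rw [Finset.sum_congr rfl e2, Finset.sum_sub_distrib, ← Finset.mul_sum, ← Finset.mul_sum,
    ← Finset.mul_sum]
  have := sum_lin2 h
  unfold fsum
  linear_combination (k - 1 : ℤ) * this

lemma mod_cast_eq (h k j : ℕ) : ((h * j % k : ℕ) : ℤ) = h * j - k * ((h * j / k : ℕ) : ℤ) := by
  have := Nat.mod_add_div (h * j) k
  have h2 : (((h * j % k + k * (h * j / k) : ℕ)) : ℤ) = ((h * j : ℕ) : ℤ) := by rw [this]
  rw [Nat.cast_add, Nat.cast_mul, Nat.cast_mul] at h2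
  linarith

lemma nsum_recip (h k : ℕ) (hh : 0 < h) (hk : 0 < k) (hc : Nat.Coprime h k) :
    (h : ℤ) * nsum h k + k * nsum k h = h ^ 2 + k ^ 2 + 1 - 3 * h * k := by
  have p1 := perm_sum h k hk hc (fun j => (j : ℤ))
  have p2 := perm_sum h k hk hc (fun j => (j : ℤ) ^ 2)
  have dc := double_count h k hh hk hc
  simp only [mod_cast_eq] at p1 p2
  rw [Finset.sum_sub_distrib, ← Finset.mul_sum, ← Finset.mul_sum] at p1
  have e : ∀ j ∈ Finset.range k, ((h : ℤ) * j - k * ((h * j / k : ℕ) : ℤ)) ^ 2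
      = h ^ 2 * (j : ℤ) ^ 2 - 2 * h * k * ((j : ℤ) * ((h * j / k : ℕ) : ℤ))
        + k ^ 2 * ((h * j / k : ℕ) : ℤ) ^ 2 := by
    intro j _; ring
  rw [Finset.sum_congr rfl e, Finset.sum_add_distrib, Finset.sum_sub_distrib, ← Finset.mul_sum,
    ← Finset.mul_sum, ← Finset.mul_sum] at p2
  rw [Finset.sum_add_distrib] at dc
  have s2 := sum_sq6 k
  have s1 := sum_lin2 k
  have hk0 : (k : ℤ) ≠ 0 := by exact_mod_cast hk.ne'
  unfold nsum
  change _ - 2 * (h : ℤ) * k * fsum h k + _ = _ at p2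
  generalize (∑ j ∈ Finset.range k, (j : ℤ) ^ 2) = Q at *
  generalize (∑ j ∈ Finset.range k, (j : ℤ)) = T at *
  generalize (∑ j ∈ Finset.range k, ((h * j / k : ℕ) : ℤ) ^ 2) = A2 at *
  generalize (∑ j ∈ Finset.range k, ((h * j / k : ℕ) : ℤ)) = A1 at *
  generalize fsum h k = F at *
  generalize fsum k h = F' at *
  apply mul_left_cancel₀ hk0
  linear_combination 6 * p2 - 6 * (k : ℤ) ^ 2 * dc - 6 * k * p1 - ((h : ℤ) ^ 2 - 1) * s2 + 3 * k * (h - 1) * s1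

lemma nsum_add (h k : ℕ) (hk : 0 < k) : nsum (h + k) k = nsum h k := by
  have : fsum (h + k) k = fsum h k + ∑ j ∈ Finset.range k, (j : ℤ) ^ 2 := by
    unfold fsum
    rw [← Finset.sum_add_distrib]
    apply Finset.sum_congr rfl
    intro j _
    rw [add_mul, Nat.add_mul_div_left _ _ hk]
    push_cast; ring
  unfold nsum
  rw [this]
  push_cast
  linear_combination (-2) * sum_sq6 k

lemma nsum_add_mul (h k t : ℕ) (hk : 0 < k) : nsum (h + k * t) k = nsum h k := by
  induction t with
  | zero => simp
  | succ n ih => rw [mul_add, mul_one, ← add_assoc, nsum_add _ _ hk, ih]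

lemma nsum_mod (h k : ℕ) (hk : 0 < k) : nsum (h % k) k = nsum h k := by
  conv_rhs => rw [← Nat.mod_add_div h k]
  rw [nsum_add_mul _ _ _ hk]

lemma nsum_neg (h k : ℕ) (hlt : h < k) (hc : Nat.Coprime h k) :
    nsum (k - h) k = - nsum h k := by
  have hk : 0 < k := by omega
  have : fsum (k - h) k = ∑ j ∈ Finset.range k, ((j : ℤ) ^ 2 - j) - fsum h k := by
    unfold fsum
    rw [← Finset.sum_sub_distrib]
    apply Finset.sum_congr rfl
    intro j hj
    have hj' := Finset.mem_range.1 hj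
    rcases Nat.eq_zero_or_pos j with rfl | hjpos
    · simp
    have hr : 0 < h * j % k := by
      rcases Nat.eq_zero_or_pos (h * j % k) with h0 | h0
      · exfalso
        have h1 : k ∣ j := (hc.symm).dvd_of_dvd_mul_left (Nat.dvd_of_mod_eq_zero h0)
        exact absurd (Nat.le_of_dvd hjpos h1) (by omega)
      · exact h0
    have hr2 := Nat.mod_lt (h * j) hk
    have hd := Nat.mod_add_div (h * j) k
    have key : (k - h) * j / k + (h * j / k + 1) = j := by
      have hle : h * j / k + 1 ≤ j := by
        rw [Nat.succ_le_iff, Nat.div_lt_iff_lt_mul hk]; nlinarith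
      have : (k - h) * j / k = j - (h * j / k + 1) := by
        zify at hd hr hr2
        apply Nat.div_eq_of_lt_le
        · zify [hlt.le, hle]
          nlinarith
        · zify [hlt.le, hle]
          nlinarith
      omega
    have key' : (((k - h) * j / k : ℕ) : ℤ) = j - 1 - ((h * j / k : ℕ) : ℤ) := by
      omega
    rw [key']; ring
  unfold nsum
  rw [this, Finset.sum_sub_distrib, Nat.cast_sub hlt.le]
  linear_combination (-2) * sum_sq6 k + 6 * sum_lin2 k

lemma dedekind_eq (h k : ℕ) (hk : 0 < k) (hc : Nat.Coprime h k) :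
    12 * (k : ℚ) * dedekindSum h k = nsum h k := by
  have hk0 : (k : ℚ) ≠ 0 := by exact_mod_cast hk.ne'
  have hsaw : ∀ n : ℕ, ¬ k ∣ n → saw ((n : ℚ) / k) = (n : ℚ) / k - ((n / k : ℕ) : ℚ) - 1 / 2 := by
    intro n hn
    unfold saw
    rw [if_neg]
    · rw [← Nat.floor_div_eq_div (K := ℚ), ← natCast_floor_eq_intCast_floor (by positivity)]
    · intro hden
      apply hn
      have h1 : ((n : ℚ) / k).num = (n : ℚ) / k := by
        exact (Rat.den_eq_one_iff _).1 hden
      rw [eq_div_iff hk0] at h1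
      have h2 : ((n : ℚ) / k).num * (k : ℤ) = n := by exact_mod_cast h1
      exact Int.natCast_dvd_natCast.1 ⟨_, by rw [mul_comm]; exact h2.symm⟩
  have e : ∀ j ∈ Finset.Icc 1 (k - 1), 12 * (k : ℚ) * (saw ((j : ℚ) / k) * saw ((h : ℚ) * j / k))
      = 12 * h / k * (j : ℚ) ^ 2 - 12 * ((j : ℚ) * ((h * j / k : ℕ) : ℚ)) - (6 + 6 * h) * (j : ℚ)
        + 6 * k * ((h * j / k : ℕ) : ℚ) + 3 * k := by
    intro j hj
    have hj' := Finset.mem_Icc.1 hj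
    have h1 : ¬ k ∣ j := fun hd => absurd (Nat.le_of_dvd (by omega) hd) (by omega)
    have h2 : ¬ k ∣ h * j := fun hd => h1 ((hc.symm).dvd_of_dvd_mul_left hd)
    have h3 := hsaw _ h2
    rw [Nat.cast_mul] at h3
    rw [hsaw _ h1, h3, Nat.div_eq_of_lt (by omega : j < k)]
    generalize ((h * j / k : ℕ) : ℚ) = a
    field_simp
    push_cast
    ring
  have hset : Finset.range k = insert 0 (Finset.Icc 1 (k - 1)) := by
    ext j; simp only [Finset.mem_range, Finset.mem_insert, Finset.mem_Icc]; omega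
  have hs : 12 * (k : ℚ) * dedekindSum h k + 3 * k = ∑ j ∈ Finset.range k,
      (12 * h / k * (j : ℚ) ^ 2 - 12 * ((j : ℚ) * ((h * j / k : ℕ) : ℚ)) - (6 + 6 * h) * (j : ℚ)
        + 6 * k * ((h * j / k : ℕ) : ℚ) + 3 * k) := by
    rw [hset, Finset.sum_insert (by simp), dedekindSum, Finset.mul_sum, Finset.sum_congr rfl e]
    simp
    ring
  rw [Finset.sum_add_distrib, Finset.sum_add_distrib, Finset.sum_sub_distrib,
    Finset.sum_sub_distrib, ← Finset.mul_sum, ← Finset.mul_sum, ← Finset.mul_sum,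
    ← Finset.mul_sum, Finset.sum_const, Finset.card_range, nsmul_eq_mul] at hs
  have s2 : 6 * ∑ j ∈ Finset.range k, (j : ℚ) ^ 2 = (k - 1) * k * (2 * k - 1) := by
    exact_mod_cast congrArg (Int.cast : ℤ → ℚ) (sum_sq6 k)
  have s1 : 2 * ∑ j ∈ Finset.range k, (j : ℚ) = (k - 1) * k := by
    have := congrArg (Int.cast : ℤ → ℚ) (sum_lin2 k)
    push_cast at this
    exact this
  have p1 := perm_sum h k hk hc (fun j => (j : ℤ))
  simp only [mod_cast_eq] at p1
  rw [Finset.sum_sub_distrib, ← Finset.mul_sum, ← Finset.mul_sum] at p1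
  have p1' : (h : ℚ) * ∑ j ∈ Finset.range k, (j : ℚ)
      - k * ∑ j ∈ Finset.range k, ((h * j / k : ℕ) : ℚ) = ∑ j ∈ Finset.range k, (j : ℚ) := by
    have := congrArg (Int.cast : ℤ → ℚ) p1
    rw [Int.cast_sub, Int.cast_mul, Int.cast_mul, Int.cast_sum, Int.cast_sum] at this
    simpa only [Int.cast_natCast] using this
  have hF : ∑ j ∈ Finset.range k, (j : ℚ) * ((h * j / k : ℕ) : ℚ) = (fsum h k : ℚ) := by
    unfold fsum
    rw [Int.cast_sum]
    apply Finset.sum_congr rfl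
    intro j _
    rw [Int.cast_mul, Int.cast_natCast, Int.cast_natCast]
  rw [hF] at hs
  unfold nsum
  push_cast
  generalize (∑ j ∈ Finset.range k, (j : ℚ) ^ 2) = Q at *
  generalize (∑ j ∈ Finset.range k, (j : ℚ)) = T at *
  generalize (∑ j ∈ Finset.range k, ((h * j / k : ℕ) : ℚ)) = A1 at *
  generalize (fsum h k : ℚ) = F at *
  have hQ : 12 * (h : ℚ) / k * Q = 2 * h * (k - 1) * (2 * k - 1) := by
    field_simp
    linear_combination 2 * (h : ℚ) * s2
  linear_combination hs + hQ - 6 * p1' - 6 * s1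

lemma arith1 (h k : ℕ) (N M J : ℤ) (hh : h % 2 = 1) (hk : k % 2 = 1) (hj : J = 1 ∨ J = -1)
    (i : (8 : ℤ) ∣ M - (h + 1 - 2 * J)) (r : (h : ℤ) * N + k * M = h ^ 2 + k ^ 2 + 1 - 3 * h * k) :
    (8 : ℤ) ∣ N - (k + 1 - 2 * (if h % 4 = 3 ∧ k % 4 = 3 then -J else J)) := by
  obtain ⟨c, hc⟩ := i
  have hM : M = h + 1 - 2 * J + 8 * c := by linarith
  subst hM
  obtain ⟨x, a, hx, rfl⟩ : ∃ x a : ℕ, x < 8 ∧ h = 8 * a + x :=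
    ⟨h % 8, h / 8, Nat.mod_lt _ (by norm_num), by omega⟩
  obtain ⟨y, b, hy, rfl⟩ : ∃ y b : ℕ, y < 8 ∧ k = 8 * b + y :=
    ⟨k % 8, k / 8, Nat.mod_lt _ (by norm_num), by omega⟩
  have r' : ∃ d : ℤ, x * N + y * (x + 1 - 2 * J) = x ^ 2 + y ^ 2 + 1 - 3 * x * y + 8 * d := by
    refine ⟨8*a^2+2*a*x+8*b^2+2*b*y-3*(8*a*b+a*y+b*x) - a * N - (8*b+y)*(a+c) - b*(x+1-2*J), ?_⟩
    push_cast at r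
    linear_combination r
  obtain ⟨d, hd⟩ := r'
  clear r hc
  rcases hj with rfl | rfl <;> interval_cases x <;> first | omega | (interval_cases y <;> omega)

lemma nsum_mod8 : ∀ (k h : ℕ), Odd k → Nat.Coprime h k →
    (8 : ℤ) ∣ nsum h k - (k + 1 - 2 * jacobiSym h k) := by
  intro k
  induction k using Nat.strong_induction_on with
  | _ k ih =>
  -- odd `h < k`
  have hoddcase : ∀ h : ℕ, Odd k → Odd h → h < k → Nat.Coprime h k →
      (8 : ℤ) ∣ nsum h k - (k + 1 - 2 * jacobiSym h k) := by
    intro h hk hh hlt hc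
    have i := ih h hlt k hh hc.symm
    have r := nsum_recip h k hh.pos hk.pos hc
    have hj : jacobiSym k h = 1 ∨ jacobiSym k h = -1 :=
      jacobiSym.eq_one_or_neg_one (by simpa using hc.symm)
    have qr := jacobiSym.quadratic_reciprocity_if (Nat.odd_iff.1 hh) (Nat.odd_iff.1 hk)
    rw [← qr]
    generalize jacobiSym k h = J at *
    generalize nsum h k = N at *
    generalize nsum k h = M at *
    clear qr ih hc hlt
    exact arith1 h k N M J (Nat.odd_iff.1 hh) (Nat.odd_iff.1 hk) hj i r
  intro h hk hc
  rcases Nat.lt_or_ge 1 k with hk1 | hk1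
  · have hkpos : 0 < k := by omega
    rw [← nsum_mod h k hkpos, jacobiSym.mod_left, ← Int.natCast_mod]
    have hc' : Nat.Coprime (h % k) k := by
      have := Nat.gcd_rec k h
      rw [Nat.Coprime, ← this, Nat.gcd_comm]
      exact hc
    have hlt := Nat.mod_lt h hkpos
    generalize h % k = g at *
    rcases Nat.even_or_odd g with hg | hg
    · have hg0 : 0 < g := by
        rcases Nat.eq_zero_or_pos g with rfl | h0
        · simp at hc'; omega
        · exact h0
      have hc2 : Nat.Coprime (k - g) k := by
        rw [Nat.coprime_self_sub_left hlt.le]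
        exact hc'
      have t := hoddcase (k - g) hk (Nat.Odd.sub_even hlt.le hk hg) (by omega) hc2
      rw [nsum_neg g k hlt hc'] at t
      have hJ : jacobiSym ((k - g : ℕ) : ℤ) k = ZMod.χ₄ k * jacobiSym g k := by
        rw [← jacobiSym.neg _ hk]
        apply jacobiSym.mod_left'
        rw [Nat.cast_sub hlt.le]
        simp
      rw [hJ, ZMod.χ₄_nat_eq_if_mod_four] at t
      have hj : jacobiSym g k = 1 ∨ jacobiSym g k = -1 :=
        jacobiSym.eq_one_or_neg_one (by simpa using hc')
      have hk2 := Nat.odd_iff.1 hk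
      rw [if_neg (by omega)] at t
      split_ifs at t <;> rcases hj with hj | hj <;> rw [hj] at t ⊢ <;> omega
    · exact hoddcase g hk hg hlt hc'
  · have : k = 1 := by have := hk.pos; omega
    subst this
    simp [nsum, fsum]

lemma arith2 (p q m : ℕ) (E A B J L : ℤ) (hp : p % 2 = 1) (hq : q % 2 = 1)
    (hJ : J = 1 ∨ J = -1) (hL : L = 1 ∨ L = -1)
    (hA : (8 : ℤ) ∣ A - (q + 1 - 2 * (J * (if p % 4 = 3 ∧ q % 4 = 3 then -L else L))))
    (hB : (8 : ℤ) ∣ B - (q + 1 - 2 * J))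
    (r : (q : ℤ) * E = p * A - B + m * (1 - (p : ℤ) ^ 2) - 3 * q * (1 - p)) :
    (8 : ℤ) ∣ 3 - 3 * p + E - (2 - 2 * L) := by
  obtain ⟨c, hc⟩ := hA
  obtain ⟨c', hc'⟩ := hB
  obtain ⟨d, hd⟩ : (8 : ℤ) ∣ (p : ℤ) ^ 2 - 1 :=
    Int.eight_dvd_sq_sub_one_of_odd (by rw [Int.odd_iff]; omega)
  generalize hX : 3 - 3 * p + E = X
  have r2 : q * X = (p - 1) * (q + 1) - 2 * J * (p * (if p % 4 = 3 ∧ q % 4 = 3 then -L else L) - 1)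
      + 8 * (p * c - c' - m * d) := by
    linear_combination r - q * hX + p * hc - hc' - m * hd
  clear r hc hc' hd hX
  generalize (p * c - c' - m * d : ℤ) = f at *
  obtain ⟨x, a, hx, rfl⟩ : ∃ x a : ℕ, x < 8 ∧ p = 8 * a + x :=
    ⟨p % 8, p / 8, Nat.mod_lt _ (by norm_num), by omega⟩
  obtain ⟨y, b, hy, rfl⟩ : ∃ y b : ℕ, y < 8 ∧ q = 8 * b + y :=
    ⟨q % 8, q / 8, Nat.mod_lt _ (by norm_num), by omega⟩
  have e1 : (8 * a + x) % 4 = x % 4 := by omega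
  have e2 : (8 * b + y) % 4 = y % 4 := by omega
  rw [e1, e2] at r2
  have r' : ∃ d : ℤ, y * X = (x - 1) * (y + 1)
      - 2 * J * (x * (if x % 4 = 3 ∧ y % 4 = 3 then -L else L) - 1) + 8 * d := by
    refine ⟨f - b * X + a * (8 * b + y + 1) + (x - 1) * b
      - 2 * J * a * (if x % 4 = 3 ∧ y % 4 = 3 then -L else L), ?_⟩
    push_cast at r2
    linear_combination r2
  obtain ⟨d, hd⟩ := r'
  clear r2 e1 e2
  rcases hJ with rfl | rfl <;> rcases hL with rfl | rfl <;> interval_cases x <;>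
    first | omega | (interval_cases y <;> omega)

lemma main_odd (p : ℕ) [Fact p.Prime] (hodd : Odd p) (m q : ℕ) (hm : 0 < m) (hqo : Odd q)
    (hcop : Nat.Coprime q (m * p)) :
    ∃ E : ℤ, (m : ℤ) * E = nsum q m - nsum q (m * p) ∧
      (8 : ℤ) ∣ 3 - 3 * p + E - (2 - 2 * legendreSym p q) := by
  have hcm : Nat.Coprime q m := hcop.coprime_mul_right_right
  have hcp : Nat.Coprime q p := hcop.coprime_mul_left_right
  have r1 := nsum_recip q m hqo.pos hm hcm
  have r2 := nsum_recip q (m * p) hqo.pos (Nat.mul_pos hm hodd.pos) hcop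
  push_cast at r2
  have hdvd : (m : ℤ) ∣ q * (nsum q m - nsum q (m * p)) :=
    ⟨p * nsum (m * p) q - nsum m q + m * (1 - (p : ℤ) ^ 2) - 3 * q * (1 - p), by
      linear_combination r1 - r2⟩
  have hdvd2 : (m : ℤ) ∣ nsum q m - nsum q (m * p) :=
    IsCoprime.dvd_of_dvd_mul_left (Nat.isCoprime_iff_coprime.2 hcm.symm) hdvd
  obtain ⟨E, hE⟩ := hdvd2
  refine ⟨E, hE.symm, ?_⟩
  have hm0 : (m : ℤ) ≠ 0 := by exact_mod_cast hm.ne'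
  have r : (q : ℤ) * E = p * nsum (m * p) q - nsum m q + m * (1 - (p : ℤ) ^ 2)
      - 3 * q * (1 - p) := by
    apply mul_left_cancel₀ hm0
    linear_combination r1 - r2 - q * hE
  have hA := nsum_mod8 q (m * p) hqo hcop.symm
  have hB := nsum_mod8 q m hqo hcm.symm
  have qr := jacobiSym.quadratic_reciprocity_if (Nat.odd_iff.1 hodd) (Nat.odd_iff.1 hqo)
  rw [Nat.cast_mul, jacobiSym.mul_left, ← qr] at hA
  rw [jacobiSym.legendreSym.to_jacobiSym]
  exact arith2 p q m E _ _ _ _ (Nat.odd_iff.1 hodd) (Nat.odd_iff.1 hqo)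
    (jacobiSym.eq_one_or_neg_one (by simpa using hcm.symm))
    (jacobiSym.eq_one_or_neg_one (by simpa using hcp)) hA hB r

lemma main_all (p : ℕ) [Fact p.Prime] (hodd : Odd p) (m q : ℕ) (hm : 0 < m)
    (hcop : Nat.Coprime q (m * p)) :
    ∃ E : ℤ, (m : ℤ) * E = nsum q m - nsum q (m * p) ∧
      (8 : ℤ) ∣ 3 - 3 * p + E - (2 - 2 * legendreSym p q) := by
  rcases Nat.even_or_odd q with hq | hq
  · have hmo : Odd m := by
      rw [← Nat.not_even_iff_odd]
      intro hme
      have h2 : 2 ∣ Nat.gcd q (m * p) :=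
        Nat.dvd_gcd hq.two_dvd (Dvd.dvd.mul_right hme.two_dvd p)
      rw [hcop] at h2
      omega
    have hc : Nat.Coprime (q + m * p) (m * p) := by simpa using hcop
    obtain ⟨E, h1, h2⟩ := main_odd p hodd m (q + m * p) hm (hq.add_odd (hmo.mul hodd)) hc
    refine ⟨E, ?_, ?_⟩
    · rw [h1, nsum_add _ _ (Nat.mul_pos hm hodd.pos), nsum_add_mul _ _ _ hm]
    · have : legendreSym p ((q + m * p : ℕ) : ℤ) = legendreSym p q := by
        rw [legendreSym.mod p, legendreSym.mod p q]
        simp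
      rwa [this] at h2
  · exact main_odd p hodd m q hm hq hcop

/-- Equation (5.2) of the paper: for an odd prime `p` and positive integers
`m, q` with `q` coprime to `mp`, the rational number
`E = 12·s(q,m) - 12p·s(q,mp)` is an integer, and
`exp(2πi(3 - 3p + E)/8)` equals the Legendre symbol `(q/p)`. -/
theorem stmt_12 (p : ℕ) [Fact p.Prime] (hodd : Odd p)
    (m q : ℕ) (hm : 0 < m) (hq : 0 < q) (hcop : Nat.Coprime q (m * p)) :
    (∃ e : ℤ, (e : ℚ) = 12 * dedekindSum q m - 12 * p * dedekindSum q (m * p)) ∧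
    Complex.exp (2 * Real.pi * Complex.I *
        (3 - 3 * (p : ℂ) +
          ((12 * dedekindSum q m - 12 * p * dedekindSum q (m * p) : ℚ) : ℂ)) / 8)
      = ((legendreSym p q : ℤ) : ℂ) := by
  have hp0 : 0 < p := hodd.pos
  have hcm : Nat.Coprime q m := hcop.coprime_mul_right_right
  have hcp : Nat.Coprime q p := hcop.coprime_mul_left_right
  obtain ⟨E, h1, h2⟩ := main_all p hodd m q hm hcop
  have d1 := dedekind_eq q m hm hcm
  have d2 := dedekind_eq q (m * p) (Nat.mul_pos hm hp0) hcop
  have hE : (E : ℚ) = 12 * dedekindSum q m - 12 * p * dedekindSum q (m * p) := by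
    have hm0 : (m : ℚ) ≠ 0 := by exact_mod_cast hm.ne'
    apply mul_left_cancel₀ hm0
    have h1' : (m : ℚ) * E = nsum q m - nsum q (m * p) := by exact_mod_cast h1
    push_cast at d2
    linear_combination h1' - d1 + d2
  refine ⟨⟨E, hE⟩, ?_⟩
  rw [← hE]
  obtain ⟨t, ht⟩ := h2
  have hL : legendreSym p q = 1 ∨ legendreSym p q = -1 := by
    rw [jacobiSym.legendreSym.to_jacobiSym]
    exact jacobiSym.eq_one_or_neg_one (by simpa using hcp)
  have ht' : (3 - 3 * (p : ℂ) + ((E : ℚ) : ℂ)) = 2 - 2 * ((legendreSym p q : ℤ) : ℂ) + 8 * t := by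
    have : 3 - 3 * (p : ℤ) + E = 2 - 2 * legendreSym p q + 8 * t := by linarith
    have h3 := congrArg (Int.cast : ℤ → ℂ) this
    push_cast at h3 ⊢
    exact h3
  rw [ht']
  rcases hL with hL | hL
  · rw [hL]
    have : 2 * (Real.pi : ℂ) * Complex.I * (2 - 2 * ((1 : ℤ) : ℂ) + 8 * t) / 8
        = t * (2 * Real.pi * Complex.I) := by push_cast; ring
    rw [this, Complex.exp_int_mul_two_pi_mul_I]
    simp
  · rw [hL]
    have : 2 * (Real.pi : ℂ) * Complex.I * (2 - 2 * ((-1 : ℤ) : ℂ) + 8 * t) / 8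
        = Real.pi * Complex.I + t * (2 * Real.pi * Complex.I) := by push_cast; ring
    rw [this, Complex.exp_add, Complex.exp_int_mul_two_pi_mul_I, Complex.exp_pi_mul_I]
    simp
end
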